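/- There exists a contractible open 3-manifold W (a connected, noncompact, contractible topological 3-manifold without boundary) which is not simply connected at infinity — in particular W is not homeomorphic to ℝ³ — but such that the product W × ℝ is homeomorphic to ℝ⁴. -/

import Mathlib

/-- A space is *simply connected at infinity* if for every compact `k` there is a larger
compact `K` such that every loop (map of the circle) avoiding `K` bounds a disk avoiding `k`. -/
def SimplyConnectedAtInfinity (X : Type*) [TopologicalSpace X] : Prop :=
  ∀ k : Set X, IsCompact k → ∃ K : Set X, IsCompact K ∧ k ⊆ K ∧
    ∀ γ : (Metric.sphere (0 : EuclideanSpace ℝ (Fin 2)) 1) → X,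
      Continuous γ → (∀ z, γ z ∉ K) →
      ∃ H : (Metric.closedBall (0 : EuclideanSpace ℝ (Fin 2)) 1) → X,
        Continuous H ∧ (∀ z, H z ∉ k) ∧
        ∀ (z : EuclideanSpace ℝ (Fin 2)) (hz : z ∈ Metric.sphere (0 : EuclideanSpace ℝ (Fin 2)) 1),
          H ⟨z, Metric.sphere_subset_closedBall hz⟩ = γ ⟨z, hz⟩

/-- A bundled contractible open 3-manifold: a connected, noncompact, contractible
topological 3-manifold without boundary. -/
structure ContractibleOpen3Manifold where
  carrier : Type
  [top : TopologicalSpace carrier]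
  [t2 : T2Space carrier]
  [secondCountable : SecondCountableTopology carrier]
  [charted : ChartedSpace (EuclideanSpace ℝ (Fin 3)) carrier]
  [conn : ConnectedSpace carrier]
  [noncompact : NoncompactSpace carrier]
  [contractible : ContractibleSpace carrier]

attribute [instance] ContractibleOpen3Manifold.top ContractibleOpen3Manifold.t2
  ContractibleOpen3Manifold.secondCountable ContractibleOpen3Manifold.charted
  ContractibleOpen3Manifold.conn ContractibleOpen3Manifold.noncompact
  ContractibleOpen3Manifold.contractible

section PartNo1

open Set Filter Topology

/-- local potential -/
def LocPot {X G : Type*} [TopologicalSpace X] [Group G] (S : Set X) (c : X → X → G)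
    (τ : X → G) : Prop :=
  ∀ x ∈ S, ∃ U ∈ 𝓝[S] x, ∀ p ∈ U, ∀ q ∈ U, c p q = (τ p)⁻¹ * τ q

/-- local cocycle -/
def ASOn {X G : Type*} [TopologicalSpace X] [Group G] (S : Set X) (c : X → X → G) : Prop :=
  ∀ x ∈ S, ∃ U ∈ 𝓝[S] x, ∀ p ∈ U, ∀ q ∈ U, ∀ r ∈ U, c p q * c q r = c p r

section AS
variable {X Y G : Type*} [TopologicalSpace X] [TopologicalSpace Y] [Group G]

lemma ASOn.pullback {S : Set X} {c : X → X → G} (h : ASOn S c) {S' : Set Y} {f : Y → X}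
    (hf : ContinuousOn f S') (hm : MapsTo f S' S) : ASOn S' (fun p q => c (f p) (f q)) := by
  intro x hx
  obtain ⟨U, hU, h⟩ := h (f x) (hm hx)
  refine ⟨f ⁻¹' U, ?_, fun p hp q hq r hr => h _ hp _ hq _ hr⟩
  exact (tendsto_nhdsWithin_iff.2 ⟨hf x hx, eventually_mem_nhdsWithin.mono fun y hy => hm hy⟩) hU

lemma LocPot.pullback {S : Set X} {c : X → X → G} {τ : X → G} (h : LocPot S c τ) {S' : Set Y}
    {f : Y → X} (hf : ContinuousOn f S') (hm : MapsTo f S' S) :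
    LocPot S' (fun p q => c (f p) (f q)) (fun p => τ (f p)) := by
  intro x hx
  obtain ⟨U, hU, h⟩ := h (f x) (hm hx)
  refine ⟨f ⁻¹' U, ?_, fun p hp q hq => h _ hp _ hq⟩
  exact (tendsto_nhdsWithin_iff.2 ⟨hf x hx, eventually_mem_nhdsWithin.mono fun y hy => hm hy⟩) hU

lemma LocPot.unique {S : Set X} {c : X → X → G} {τ τ' : X → G} (hS : IsPreconnected S)
    (h : LocPot S c τ) (h' : LocPot S c τ') {p q : X} (hp : p ∈ S) (hq : q ∈ S) :
    τ p * (τ' p)⁻¹ = τ q * (τ' q)⁻¹ := by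
  refine hS.induction₂' (fun p q => τ p * (τ' p)⁻¹ = τ q * (τ' q)⁻¹) ?_ ?_ hp hq
  · intro x hx
    obtain ⟨U, hU, hU'⟩ := h x hx
    obtain ⟨V, hV, hV'⟩ := h' x hx
    filter_upwards [hU, hV] with y hyU hyV
    have hxU := mem_of_mem_nhdsWithin hx hU
    have hxV := mem_of_mem_nhdsWithin hx hV
    have e : τ x * (τ' x)⁻¹ = τ y * (τ' y)⁻¹ := by
      have := (hU' x hxU y hyU).symm.trans (hV' x hxV y hyV)
      have e1 : τ y = τ x * ((τ' x)⁻¹ * τ' y) := by rw [← this]; group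
      rw [e1]; group
    exact ⟨e, e.symm⟩
  · intro x y z _ _ _ h1 h2
    exact h1.trans h2

lemma LocPot.mul_left {S : Set X} {c : X → X → G} {τ : X → G} (h : LocPot S c τ) (g : G) :
    LocPot S c (fun p => g * τ p) := by
  intro x hx
  obtain ⟨U, hU, h⟩ := h x hx
  exact ⟨U, hU, fun p hp q hq => by rw [h p hp q hq]; group⟩

lemma LocPot.asOn {S : Set X} {c : X → X → G} {τ : X → G} (h : LocPot S c τ) : ASOn S c := by
  intro x hx
  obtain ⟨U, hU, h⟩ := h x hx
  exact ⟨U, hU, fun p hp q hq r hr => by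
    rw [h p hp q hq, h q hq r hr, h p hp r hr]; group⟩

/-- partial products along a straight segment -/
noncomputable def segProd {E : Type*} [AddCommGroup E] [Module ℝ E] (c : E → E → G) (N : ℕ) (a p : E) : ℕ → G
  | 0 => 1
  | i + 1 => segProd c N a p i *
      c (a + ((i : ℝ) / N) • (p - a)) (a + (((i + 1 : ℕ) : ℝ) / N) • (p - a))

lemma ASOn.exists_pot {E : Type*} [NormedAddCommGroup E] [NormedSpace ℝ E] {Ω : Set E}
    (hΩ : IsCompact Ω) (hc : Convex ℝ Ω) {c : E → E → G} (h : ASOn Ω c) :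
    ∃ τ : E → G, LocPot Ω c τ := by
  rcases Ω.eq_empty_or_nonempty with rfl | ⟨a, ha⟩
  · exact ⟨fun _ => 1, fun x hx => hx.elim⟩
  have hex : ∀ x : Ω, ∃ V : Set E, IsOpen V ∧ (x : E) ∈ V ∧
      ∀ p ∈ V ∩ Ω, ∀ q ∈ V ∩ Ω, ∀ r ∈ V ∩ Ω, c p q * c q r = c p r := by
    intro x
    obtain ⟨U, hU, h⟩ := h x x.2
    obtain ⟨V, hVo, hxV, hV⟩ := mem_nhdsWithin.1 hU
    exact ⟨V, hVo, hxV, fun p hp q hq r hr => h p (hV hp) q (hV hq) r (hV hr)⟩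
  choose V hVo hxV hV using hex
  obtain ⟨δ, hδ, hL⟩ := lebesgue_number_lemma_of_metric hΩ hVo
    (fun x hx => mem_iUnion.2 ⟨⟨x, hx⟩, hxV ⟨x, hx⟩⟩)
  obtain ⟨D, hD⟩ := hΩ.isBounded.exists_norm_le
  have hD0 : 0 ≤ D := (norm_nonneg a).trans (hD a ha)
  obtain ⟨N, hN⟩ := exists_nat_gt (2 * D / (δ / 4))
  have hN0 : (0 : ℝ) < N := lt_of_le_of_lt (by positivity) hN
  have hstep : 2 * D / N < δ / 4 := by
    rw [div_lt_iff₀ (by positivity)] at hN ⊢; linarith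
  -- cocycle identity for close points
  have key : ∀ x ∈ Ω, ∀ p ∈ Ω, ∀ q ∈ Ω, ∀ r ∈ Ω, dist p x < δ → dist q x < δ → dist r x < δ →
      c p q * c q r = c p r := by
    intro x hx p hp q hq r hr h1 h2 h3
    obtain ⟨i, hi⟩ := hL x hx
    exact hV i p ⟨hi h1, hp⟩ q ⟨hi h2, hq⟩ r ⟨hi h3, hr⟩
  have hcc : ∀ x ∈ Ω, c x x = 1 := by
    intro x hx
    have := key x hx x hx x hx x hx (by simpa) (by simpa) (by simpa)
    simpa using this
  set P : E → ℕ → E := fun p i => a + ((i : ℝ) / N) • (p - a) with hP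
  have hPm : ∀ p ∈ Ω, ∀ i ≤ N, P p i ∈ Ω := by
    intro p hp i hi
    have h1 : (i : ℝ) / N ≤ 1 := by rw [div_le_one hN0]; exact_mod_cast hi
    have := hc.add_smul_sub_mem ha hp (t := (i : ℝ) / N) ⟨by positivity, h1⟩
    exact this
  have hPd : ∀ p ∈ Ω, ∀ i, dist (P p (i + 1)) (P p i) < δ / 4 := by
    intro p hp i
    have : P p (i+1) - P p i = ((1 : ℝ) / N) • (p - a) := by
      simp only [hP]; rw [add_sub_add_left_eq_sub, ← sub_smul]; congr 1; push_cast; ring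
    rw [dist_eq_norm, this, norm_smul, Real.norm_of_nonneg (by positivity)]
    refine lt_of_le_of_lt ?_ hstep
    have := norm_sub_le p a
    have h2 := hD p hp
    have h3 := hD a ha
    rw [one_div, inv_mul_eq_div]
    gcongr; linarith
  have hPq : ∀ p ∈ Ω, ∀ q ∈ Ω, dist p q < δ / 4 → ∀ i ≤ N, dist (P p i) (P q i) < δ / 4 := by
    intro p hp q hq hpq i hi
    have h1 : (i : ℝ) / N ≤ 1 := by rw [div_le_one hN0]; exact_mod_cast hi
    have : P p i - P q i = ((i : ℝ) / N) • (p - q) := by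
      simp only [hP]; rw [add_sub_add_left_eq_sub, ← smul_sub]; congr 1; abel
    rw [dist_eq_norm, this, norm_smul, Real.norm_of_nonneg (by positivity)]
    rw [dist_eq_norm] at hpq
    refine lt_of_le_of_lt ?_ hpq
    exact mul_le_of_le_one_left (norm_nonneg _) h1
  have ladder : ∀ p ∈ Ω, ∀ q ∈ Ω, dist p q < δ / 4 → ∀ i ≤ N,
      segProd c N a p i * c (P p i) (P q i) = segProd c N a q i := by
    intro p hp q hq hpq i
    induction i with
    | zero =>
      intro _
      have : ∀ p, P p 0 = a := fun p => by simp [hP]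
      simp [segProd, this, hcc a ha]
    | succ i ih =>
      intro hi
      have ih := ih (by omega)
      have e1 := key (P p i) (hPm p hp i (by omega)) (P p i) (hPm p hp i (by omega))
        (P p (i+1)) (hPm p hp _ hi) (P q (i+1)) (hPm q hq _ hi) (by simpa)
        (by have := hPd p hp i; linarith)
        (by
          have h1 := hPd p hp i
          have h2 := hPq p hp q hq hpq (i+1) hi
          have := dist_triangle_left (P q (i+1)) (P p i) (P p (i+1))
          linarith)
      have e2 := key (P p i) (hPm p hp i (by omega)) (P p i) (hPm p hp i (by omega))
        (P q i) (hPm q hq _ (by omega)) (P q (i+1)) (hPm q hq _ hi) (by simpa)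
        (by have := hPq p hp q hq hpq i (by omega); rw [dist_comm]; linarith)
        (by
          have h1 := hPd p hp i
          have h2 := hPq p hp q hq hpq (i+1) hi
          have := dist_triangle_left (P q (i+1)) (P p i) (P p (i+1))
          linarith)
      change segProd c N a p i * c (P p i) (P p (i+1)) * c (P p (i+1)) (P q (i+1)) =
        segProd c N a q i * c (P q i) (P q (i+1))
      rw [mul_assoc, e1, ← e2, ← mul_assoc, ih]
  refine ⟨fun p => segProd c N a p N, fun x hx => ⟨Metric.ball x (δ/8) ∩ Ω, ?_, ?_⟩⟩
  · exact inter_comm Ω _ ▸ inter_mem_nhdsWithin _ (Metric.ball_mem_nhds _ (by positivity))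
  · rintro p ⟨hpx, hp⟩ q ⟨hqx, hq⟩
    have hpq : dist p q < δ / 4 := by
      have := dist_triangle_right p q x
      rw [Metric.mem_ball] at hpx hqx; linarith
    have := ladder p hp q hq hpq N le_rfl
    have hPN : ∀ p, P p N = p := fun p => by simp [hP, div_self hN0.ne']
    rw [hPN, hPN] at this
    simp only [← this]; group

lemma ASOn.exists_pot_univ {E : Type*} [NormedAddCommGroup E] [NormedSpace ℝ E] [ProperSpace E]
    {c : E → E → G} (h : ASOn univ c) :
    ∃ τ : E → G, LocPot univ c τ ∧ τ 0 = 1 := by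
  have hB : ∀ n : ℕ, ∃ τ : E → G, LocPot (Metric.closedBall 0 n) c τ ∧ τ 0 = 1 := by
    intro n
    have h' : ASOn (Metric.closedBall (0:E) n) c :=
      h.pullback (f := id) continuousOn_id (mapsTo_univ _ _)
    obtain ⟨τ, hτ⟩ := h'.exists_pot (isCompact_closedBall _ _) (convex_closedBall _ _)
    exact ⟨_, hτ.mul_left (τ 0)⁻¹, by simp⟩
  choose τ hτ h0 using hB
  have hcmp : ∀ m n : ℕ, m ≤ n → ∀ p : E, ‖p‖ ≤ m → τ m p = τ n p := by
    intro m n hmn p hp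
    have hmn' : (m:ℝ) ≤ n := by exact_mod_cast hmn
    have h1 : LocPot (Metric.closedBall 0 m) c (τ n) :=
      (hτ n).pullback (f := id) continuousOn_id (Metric.closedBall_subset_closedBall hmn')
    have := (hτ m).unique (convex_closedBall _ _).isPreconnected h1
      (p := p) (q := 0) (by simpa using hp) (by simp)
    rw [h0, h0] at this
    simpa [mul_inv_eq_one] using this
  refine ⟨fun p => τ ⌈‖p‖⌉₊ p, fun x _ => ?_, by simp [h0]⟩
  set M := ⌈‖x‖⌉₊ + 1 with hM
  obtain ⟨U, hU, hU'⟩ := hτ M x (by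
    have := Nat.le_ceil ‖x‖
    simp [hM]; linarith)
  have hnh : Metric.closedBall (0:E) M ∈ 𝓝 x := by
    apply Metric.closedBall_mem_nhds_of_mem
    have := Nat.le_ceil ‖x‖
    simp [hM]; linarith
  rw [nhdsWithin_eq_nhds.2 hnh] at hU
  refine ⟨U ∩ Metric.closedBall 0 M, by rw [nhdsWithin_univ]; exact inter_mem hU hnh, ?_⟩
  have e : ∀ p ∈ U ∩ Metric.closedBall 0 M, τ ⌈‖p‖⌉₊ p = τ M p := by
    rintro p ⟨-, hp⟩
    refine hcmp _ _ ?_ p (Nat.le_ceil _)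
    exact Nat.ceil_le.2 (by simpa using hp)
  intro p hp q hq
  simp only [e p hp, e q hq]
  exact hU' p hp.1 q hq.1

/-- a loop with nontrivial holonomy does not bound a disc -/
lemma no_disc {S : Set X} {c : X → X → G} (h : ASOn S c)
    {H : (Metric.closedBall (0 : EuclideanSpace ℝ (Fin 2)) 1) → X} (hH : Continuous H)
    (hm : ∀ z, H z ∈ S) {a b : ℝ} (hab : a ≤ b) {f : ℝ → EuclideanSpace ℝ (Fin 2)}
    (hf : Continuous f) (hf1 : ∀ t, f t ∈ Metric.closedBall (0 : EuclideanSpace ℝ (Fin 2)) 1)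
    (hfab : f a = f b) {σ : ℝ → G}
    (hσ : LocPot (Icc a b) (fun s t => c (H ⟨f s, hf1 s⟩) (H ⟨f t, hf1 t⟩)) σ) :
    σ a = σ b := by
  classical
  let F : EuclideanSpace ℝ (Fin 2) → X := fun z =>
    if hz : z ∈ Metric.closedBall (0 : EuclideanSpace ℝ (Fin 2)) 1 then H ⟨z, hz⟩
    else H ⟨0, by simp⟩
  have hF : ∀ z (hz : z ∈ Metric.closedBall (0 : EuclideanSpace ℝ (Fin 2)) 1),
      F z = H ⟨z, hz⟩ := fun z hz => by simp only [F, dif_pos hz]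
  have hFc : ContinuousOn F (Metric.closedBall (0 : EuclideanSpace ℝ (Fin 2)) 1) := by
    rw [continuousOn_iff_continuous_domRestrict]
    convert hH using 1
    ext z; exact hF z z.2
  have h2 := h.pullback hFc (fun z hz => by rw [hF z hz]; exact hm _)
  obtain ⟨τ, hτ⟩ := h2.exists_pot (isCompact_closedBall _ _) (convex_closedBall _ _)
  have h3 : LocPot (Icc a b) (fun s t => c (H ⟨f s, hf1 s⟩) (H ⟨f t, hf1 t⟩))
      (fun t => τ (f t)) := by
    have := hτ.pullback (f := f) (S' := Icc a b) hf.continuousOn (fun t _ => hf1 t)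
    simpa only [hF _ (hf1 _)] using this
  have := hσ.unique isPreconnected_Icc h3 (p := a) (q := b) (by simp [hab]) (by simp [hab])
  simpa [hfab] using this

end AS

end PartNo1

section PartNo2

open Set Filter Topology

set_option linter.unusedSectionVars false
section Brown
variable {E : Type*} [NormedAddCommGroup E] [NormedSpace ℝ E]

lemma exists_radial_orderIso {δ ε r R : ℝ} (hδε : δ < ε) (hδr : δ < r) (hrR : r < R) :
    ∃ ρ : ℝ ≃o ℝ, (∀ t ≤ δ, ρ t = t) ∧ (∀ t, R ≤ t → ρ t = t) ∧ ρ r < ε := by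
  obtain ⟨e, he1, he2⟩ := exists_between (lt_min hδε hδr)
  have hee : e < ε := lt_of_lt_of_le he2 (min_le_left _ _)
  have her : e < r := lt_of_lt_of_le he2 (min_le_right _ _)
  set s := (e - δ) / (r - δ) with hs
  set S := (R - e) / (R - r) with hS
  have hs0 : 0 < s := div_pos (by linarith) (by linarith)
  have hs1 : s ≤ 1 := (div_le_one (by linarith)).2 (by linarith)
  have hS1 : 1 ≤ S := (one_le_div (by linarith)).2 (by linarith)
  have hsr : s * (r - δ) = e - δ := div_mul_cancel₀ _ (by linarith)
  have hSr : S * (R - r) = R - e := div_mul_cancel₀ _ (by linarith)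
  let f : ℝ → ℝ := fun t => min t (max (δ + s * (t - δ)) (R - S * (R - t)))
  have hmono : StrictMono f := by
    intro a b hab
    have k1 : s * (a - δ) < s * (b - δ) := mul_lt_mul_of_pos_left (by linarith) hs0
    have k2 : S * (R - b) < S * (R - a) := mul_lt_mul_of_pos_left (by linarith) (by linarith)
    exact min_lt_min hab (max_lt_max (by linarith) (by linarith))
  have h1 : ∀ t ≤ δ, f t = t := by
    intro t ht
    refine min_eq_left (le_max_of_le_left ?_)
    nlinarith
  have h2 : ∀ t, R ≤ t → f t = t := by
    intro t ht
    refine min_eq_left (le_max_of_le_right ?_)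
    nlinarith
  have hc : Continuous f := by fun_prop
  have hsurj : Function.Surjective f := by
    refine hc.surjective ?_ ?_
    · exact tendsto_id.congr' ((eventually_ge_atTop R).mono fun t ht => (h2 t ht).symm)
    · exact tendsto_id.congr' ((eventually_le_atBot δ).mono fun t ht => (h1 t ht).symm)
  refine ⟨hmono.orderIsoOfSurjective f hsurj, h1, h2, ?_⟩
  change f r < ε
  refine lt_of_le_of_lt (min_le_right _ _) ?_
  rw [hsr, hSr]; simp [hee]

/-- radial map -/
noncomputable def radMap (E : Type*) [NormedAddCommGroup E] [NormedSpace ℝ E]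
    (δ : ℝ) (ρ : ℝ ≃o ℝ) (x : E) : E :=
  (ρ (max ‖x‖ δ) / max ‖x‖ δ) • x

lemma radMap_cont {δ : ℝ} (hδ : 0 < δ) (ρ : ℝ ≃o ℝ) : Continuous (radMap E δ ρ) := by
  unfold radMap
  refine Continuous.smul (Continuous.div ?_ (by fun_prop) ?_) continuous_id
  · exact ρ.continuous.comp (by fun_prop)
  · intro x; exact (lt_max_of_lt_right hδ).ne'

lemma radMap_of_le {δ : ℝ} (hδ : 0 < δ) {ρ : ℝ ≃o ℝ} (h : ∀ t ≤ δ, ρ t = t) {x : E}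
    (hx : ‖x‖ ≤ δ) : radMap E δ ρ x = x := by
  simp [radMap, max_eq_right hx, h δ le_rfl, hδ.ne']

lemma norm_radMap {δ : ℝ} (hδ : 0 < δ) {ρ : ℝ ≃o ℝ} (h : ∀ t ≤ δ, ρ t = t) (x : E) :
    ‖radMap E δ ρ x‖ = ρ ‖x‖ := by
  rcases le_total ‖x‖ δ with hx | hx
  · rw [radMap_of_le hδ h hx, h _ hx]
  · have h0 : 0 < ‖x‖ := hδ.trans_le hx
    have h1 : 0 < ρ ‖x‖ := by
      have : ρ δ ≤ ρ ‖x‖ := ρ.monotone hx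
      rw [h δ le_rfl] at this; linarith
    rw [radMap, max_eq_left hx, norm_smul, Real.norm_of_nonneg (by positivity),
      div_mul_cancel₀ _ h0.ne']

lemma radMap_symm {δ : ℝ} (hδ : 0 < δ) {ρ : ℝ ≃o ℝ} (h : ∀ t ≤ δ, ρ t = t) (x : E) :
    radMap E δ ρ.symm (radMap E δ ρ x) = x := by
  have h' : ∀ t ≤ δ, ρ.symm t = t := fun t ht => by rw [OrderIso.symm_apply_eq, h t ht]
  rcases le_total ‖x‖ δ with hx | hx
  · rw [radMap_of_le hδ h hx, radMap_of_le hδ h' hx]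
  · have h0 : 0 < ‖x‖ := hδ.trans_le hx
    have h1 : δ ≤ ρ ‖x‖ := by
      have : ρ δ ≤ ρ ‖x‖ := ρ.monotone hx
      rwa [h δ le_rfl] at this
    rw [radMap, norm_radMap hδ h, max_eq_left h1, OrderIso.symm_apply_apply, radMap,
      max_eq_left hx, smul_smul, div_mul_div_cancel₀ (by linarith), div_self h0.ne', one_smul]

lemma exists_radial {δ ε r R : ℝ} (hδ : 0 < δ) (hδε : δ < ε) (hδr : δ < r) (hrR : r < R) :
    ∃ φ : E ≃ₜ E, (∀ x, ‖x‖ ≤ δ → φ x = x) ∧ (∀ x, R ≤ ‖x‖ → φ x = x) ∧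
      (∀ x, ‖x‖ ≤ r → ‖φ x‖ < ε) ∧ (∀ x, ‖x‖ ≤ R → ‖φ x‖ ≤ R) ∧
      (∀ x, ‖φ x‖ ≤ R → ‖x‖ ≤ R) := by
  obtain ⟨ρ, h1, h2, h3⟩ := exists_radial_orderIso hδε hδr hrR
  have h' : ∀ t ≤ δ, ρ.symm t = t := fun t ht => by rw [OrderIso.symm_apply_eq, h1 t ht]
  refine ⟨{ toFun := radMap E δ ρ, invFun := radMap E δ ρ.symm, left_inv := radMap_symm hδ h1,
            right_inv := radMap_symm hδ (ρ := ρ.symm) h', continuous_toFun := radMap_cont hδ _,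
            continuous_invFun := radMap_cont hδ _ }, ?_, ?_, ?_, ?_, ?_⟩
  · intro x hx; exact radMap_of_le hδ h1 hx
  · intro x hx
    change radMap E δ ρ x = x
    have hd : δ ≤ ‖x‖ := by linarith
    rw [radMap, max_eq_left hd, h2 _ hx, div_self (by linarith), one_smul]
  · intro x hx
    change ‖radMap E δ ρ x‖ < ε
    rw [norm_radMap hδ h1]
    exact (ρ.monotone hx).trans_lt h3
  · intro x hx
    change ‖radMap E δ ρ x‖ ≤ R
    rw [norm_radMap hδ h1]
    have := ρ.monotone hx
    rwa [h2 R le_rfl] at this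
  · intro x hx
    change ‖radMap E δ ρ x‖ ≤ R at hx
    rw [norm_radMap hδ h1, ← h2 R le_rfl] at hx
    exact ρ.le_iff_le.1 hx

variable [ProperSpace E] {X : Type*} [TopologicalSpace X] [T2Space X]

open Classical in
/-- transported map -/
noncomputable def transp (f : E → X) (φ : E → E) (y : X) : X :=
  if h : ∃ x, f x = y then f (φ h.choose) else y

lemma transp_apply {f : E → X} (hf : Function.Injective f) (φ : E → E) (x : E) :
    transp f φ (f x) = f (φ x) := by
  have h : ∃ x', f x' = f x := ⟨x, rfl⟩
  rw [transp, dif_pos h, hf h.choose_spec]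

lemma transp_out {f : E → X} (hf : Function.Injective f) {φ : E → E} {R : ℝ}
    (hφ : ∀ x, R ≤ ‖x‖ → φ x = x) {y : X} (hy : y ∉ f '' Metric.closedBall 0 R) :
    transp f φ y = y := by
  by_cases h : ∃ x, f x = y
  · obtain ⟨x, rfl⟩ := h
    rw [transp_apply hf, hφ]
    by_contra hx
    exact hy ⟨x, by simp; linarith, rfl⟩
  · rw [transp, dif_neg h]

lemma transp_cont {f : E → X} (hf : IsOpenEmbedding f) {φ : E → E} (hc : Continuous φ) {R : ℝ}
    (hφ : ∀ x, R ≤ ‖x‖ → φ x = x) : Continuous (transp f φ) := by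
  rw [continuous_iff_continuousAt]
  intro y
  by_cases hy : y ∈ f '' Metric.closedBall 0 R
  · obtain ⟨x, -, rfl⟩ := hy
    rw [← hf.continuousAt_iff]
    have : transp f φ ∘ f = f ∘ φ := funext fun x => transp_apply hf.injective φ x
    rw [this]
    exact (hf.continuous.comp hc).continuousAt
  · have hcl : IsClosed (f '' Metric.closedBall 0 R) :=
      ((isCompact_closedBall 0 R).image hf.continuous).isClosed
    have : transp f φ =ᶠ[𝓝 y] id := by
      filter_upwards [hcl.isOpen_compl.mem_nhds hy] with z hz
      exact transp_out hf.injective hφ hz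
    exact continuousAt_id.congr this.symm

lemma exists_transp {f : E → X} (hf : IsOpenEmbedding f) (φ : E ≃ₜ E) {R : ℝ}
    (hφ : ∀ x, R ≤ ‖x‖ → φ x = x) :
    ∃ Φ : X ≃ₜ X, (∀ x, Φ (f x) = f (φ x)) ∧ ∀ y ∉ f '' Metric.closedBall 0 R, Φ y = y := by
  have hφ' : ∀ x, R ≤ ‖x‖ → φ.symm x = x := fun x hx => by
    rw [Homeomorph.symm_apply_eq, hφ x hx]
  have inv : ∀ (φ : E ≃ₜ E) y, transp f φ.symm (transp f φ y) = y := by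
    intro φ y
    by_cases h : ∃ x, f x = y
    · obtain ⟨x, rfl⟩ := h
      rw [transp_apply hf.injective, transp_apply hf.injective, Homeomorph.symm_apply_apply]
    · have : ∀ ψ : E → E, transp f ψ y = y := fun ψ => by rw [transp, dif_neg h]
      rw [this, this]
  exact ⟨{ toFun := transp f φ, invFun := transp f φ.symm, left_inv := inv φ,
           right_inv := inv φ.symm, continuous_toFun := transp_cont hf φ.continuous hφ,
           continuous_invFun := transp_cont hf φ.symm.continuous hφ' },
    fun x => transp_apply hf.injective φ x, fun y hy => transp_out hf.injective hφ hy⟩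

lemma brown_step
    (H : ∀ C : Set X, IsCompact C → ∃ h : E → X, IsOpenEmbedding h ∧ C ⊆ range h)
    {f : E → X} (hf : IsOpenEmbedding f) {a b : ℝ} (ha : 0 < a) (hab : a < b) {D : Set X}
    (hD : IsCompact D) :
    ∃ f' : E → X, IsOpenEmbedding f' ∧ (∀ x, ‖x‖ ≤ a → f' x = f x) ∧
      D ⊆ f' '' Metric.closedBall 0 b := by
  set C := f '' Metric.closedBall 0 b ∪ D with hC
  have hCc : IsCompact C := ((isCompact_closedBall 0 b).image hf.continuous).union hD
  obtain ⟨h, hh, hh0, hhC⟩ : ∃ h : E → X, IsOpenEmbedding h ∧ h 0 = f 0 ∧ C ⊆ range h := by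
    obtain ⟨h, hh, hCh⟩ := H C hCc
    obtain ⟨x0, hx0⟩ := hCh (Or.inl ⟨0, by simp; linarith, rfl⟩ : f 0 ∈ C)
    refine ⟨h ∘ Homeomorph.addRight x0, hh.comp (Homeomorph.isOpenEmbedding _), by simpa, ?_⟩
    rwa [(Homeomorph.addRight x0).surjective.range_comp]
  -- ε
  obtain ⟨ε, hε, hεf⟩ : ∃ ε > 0, ∀ x, ‖x‖ < ε → h x ∈ f '' Metric.ball 0 b := by
    have : h ⁻¹' (f '' Metric.ball 0 b) ∈ 𝓝 (0 : E) := by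
      apply hh.continuous.continuousAt
      rw [hh0]
      exact (hf.isOpenMap _ Metric.isOpen_ball).mem_nhds ⟨0, by simp; linarith, rfl⟩
    obtain ⟨ε, hε, h'⟩ := Metric.mem_nhds_iff.1 this
    exact ⟨ε, hε, fun x hx => h' (by simpa using hx)⟩
  obtain ⟨r, hrε, hr⟩ : ∃ r, ε < r ∧ ∀ y ∈ C, ∃ x, ‖x‖ ≤ r ∧ h x = y := by
    have hcp : IsCompact (h ⁻¹' C) := hh.isInducing.isCompact_preimage' hCc hhC
    obtain ⟨r, hr⟩ := hcp.isBounded.exists_norm_le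
    refine ⟨max r (ε + 1), lt_max_of_lt_right (by linarith), fun y hy => ?_⟩
    obtain ⟨x, rfl⟩ := hhC hy
    exact ⟨x, le_max_of_le_left (hr x hy), rfl⟩
  obtain ⟨φ₁, p1, p2, p3, -, -⟩ := exists_radial (E := E) (half_pos hε) (half_lt_self hε)
    (by linarith : ε / 2 < r) (lt_add_one r)
  obtain ⟨θ, hθ, -⟩ := exists_transp hh φ₁ p2
  obtain ⟨ε', hε', hεf'⟩ : ∃ ε' > 0, ∀ x, ‖x‖ < ε' → f x ∈ h '' Metric.ball 0 (ε / 2) := by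
    have : f ⁻¹' (h '' Metric.ball 0 (ε / 2)) ∈ 𝓝 (0 : E) := by
      apply hf.continuous.continuousAt
      rw [← hh0]
      exact (hh.isOpenMap _ Metric.isOpen_ball).mem_nhds ⟨0, by simp; linarith, rfl⟩
    obtain ⟨ε, hε, h'⟩ := Metric.mem_nhds_iff.1 this
    exact ⟨ε, hε, fun x hx => h' (by simpa using hx)⟩
  have hm : 0 < min ε' a := lt_min hε' ha
  obtain ⟨φ₂, q1, q2, q3, q4, q5⟩ := exists_radial (E := E) (half_pos hm)
    ((half_lt_self hm).trans_le (min_le_left _ _)) ((half_lt_self hm).trans_le (min_le_right _ _))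
    hab
  obtain ⟨η, hη, hη'⟩ := exists_transp hf φ₂ q2
  refine ⟨fun x => η.symm (θ.symm (η (f x))), ?_, ?_, ?_⟩
  · exact η.symm.isOpenEmbedding.comp (θ.symm.isOpenEmbedding.comp (η.isOpenEmbedding.comp hf))
  · intro x hx
    change η.symm (θ.symm (η (f x))) = f x
    rw [Homeomorph.symm_apply_eq, Homeomorph.symm_apply_eq, hη]
    obtain ⟨z, hz, hzx⟩ := hεf' _ (q3 x hx)
    rw [← hzx, hθ, p1 z (by simpa using (Metric.mem_ball.1 hz).le)]
  · intro y hy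
    have hηy : η y ∈ C := by
      by_cases hyf : y ∈ f '' Metric.closedBall 0 b
      · obtain ⟨x, hx, rfl⟩ := hyf
        rw [hη]
        exact Or.inl ⟨_, by simpa using q4 x (by simpa using hx), rfl⟩
      · rw [hη' y hyf]; exact Or.inr hy
    obtain ⟨z, hz, hzy⟩ := hr _ hηy
    obtain ⟨x', hx', hx''⟩ := hεf _ (p3 z hz)
    have hx2 : ‖φ₂.symm x'‖ ≤ b := by
      apply q5
      simpa using (Metric.mem_ball.1 hx').le
    refine ⟨φ₂.symm x', by simpa using hx2, ?_⟩
    change η.symm (θ.symm (η (f (φ₂.symm x')))) = y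
    rw [Homeomorph.symm_apply_eq, Homeomorph.symm_apply_eq, hη, ← hzy, hθ,
      Homeomorph.apply_symm_apply, hx'']

theorem brown [SigmaCompactSpace X]
    (H : ∀ C : Set X, IsCompact C → ∃ h : E → X, IsOpenEmbedding h ∧ C ⊆ range h) :
    Nonempty (X ≃ₜ E) := by
  obtain ⟨f₀, hf₀, -⟩ := H ∅ isCompact_empty
  let F : ℕ → {f : E → X // IsOpenEmbedding f} := fun n => Nat.rec ⟨f₀, hf₀⟩
    (fun n f => ⟨_, (brown_step H f.2 (a := n + 1) (b := n + 2) (by positivity) (by linarith)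
      (isCompact_compactCovering X n)).choose_spec.1⟩) n
  have hF1 : ∀ n : ℕ, ∀ x, ‖x‖ ≤ n + 1 → (F (n+1)).1 x = (F n).1 x := fun n =>
    (brown_step H (F n).2 (a := n + 1) (b := n + 2) (by positivity) (by linarith)
      (isCompact_compactCovering X n)).choose_spec.2.1
  have hF2 : ∀ n : ℕ, compactCovering X n ⊆ (F (n+1)).1 '' Metric.closedBall 0 (n+2) := fun n =>
    (brown_step H (F n).2 (a := n + 1) (b := n + 2) (by positivity) (by linarith)
      (isCompact_compactCovering X n)).choose_spec.2.2
  have hF3 : ∀ n m : ℕ, n ≤ m → ∀ x, ‖x‖ ≤ n + 1 → (F m).1 x = (F n).1 x := by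
    intro n m hnm
    induction m, hnm using Nat.le_induction with
    | base => intro x _; rfl
    | succ m hm ih =>
      intro x hx
      rw [hF1 m x (hx.trans (by gcongr)), ih x hx]
  let g : E → X := fun x => (F ⌈‖x‖⌉₊).1 x
  have hg : ∀ n : ℕ, ∀ x, ‖x‖ ≤ n + 1 → g x = (F n).1 x := by
    intro n x hx
    rcases le_total ⌈‖x‖⌉₊ n with h | h
    · exact (hF3 _ _ h x ((Nat.le_ceil _).trans (by linarith))).symm
    · exact hF3 _ _ h x hx
  have hgl : ∀ x, g =ᶠ[𝓝 x] (F ⌈‖x‖⌉₊).1 := by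
    intro x
    have : Metric.ball (0 : E) (⌈‖x‖⌉₊ + 1) ∈ 𝓝 x := by
      apply Metric.isOpen_ball.mem_nhds
      have := Nat.le_ceil ‖x‖
      simp; linarith
    filter_upwards [this] with y hy
    exact hg _ y (by simpa using (Metric.mem_ball.1 hy).le)
  have hcont : Continuous g := continuous_iff_continuousAt.2 fun x =>
    ((F ⌈‖x‖⌉₊).2.continuous.continuousAt).congr (hgl x).symm
  have hopen : IsOpenMap g := by
    rw [isOpenMap_iff_nhds_le]
    intro x
    rw [Filter.map_congr (hgl x), (hgl x).eq_of_nhds]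
    exact ((F ⌈‖x‖⌉₊).2.map_nhds_eq x).ge
  have hinj : Function.Injective g := by
    intro x y hxy
    have h1 : ‖x‖ ≤ ((max ⌈‖x‖⌉₊ ⌈‖y‖⌉₊ : ℕ) : ℝ) + 1 := by
      have := Nat.le_ceil ‖x‖
      have h2 : ((⌈‖x‖⌉₊ : ℕ) : ℝ) ≤ ((max ⌈‖x‖⌉₊ ⌈‖y‖⌉₊ : ℕ) : ℝ) := by
        exact_mod_cast le_max_left _ _
      linarith
    have h1' : ‖y‖ ≤ ((max ⌈‖x‖⌉₊ ⌈‖y‖⌉₊ : ℕ) : ℝ) + 1 := by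
      have := Nat.le_ceil ‖y‖
      have h2 : ((⌈‖y‖⌉₊ : ℕ) : ℝ) ≤ ((max ⌈‖x‖⌉₊ ⌈‖y‖⌉₊ : ℕ) : ℝ) := by
        exact_mod_cast le_max_right _ _
      linarith
    rw [hg _ x h1, hg _ y h1'] at hxy
    exact (F _).2.injective hxy
  have hsurj : Function.Surjective g := by
    intro y
    have : y ∈ ⋃ n, compactCovering X n := by rw [iUnion_compactCovering]; trivial
    obtain ⟨n, hn⟩ := mem_iUnion.1 this
    obtain ⟨x, hx, hxy⟩ := hF2 n hn
    refine ⟨x, ?_⟩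
    rw [hg (n+1) x, hxy]
    have : ‖x‖ ≤ n + 2 := by simpa using hx
    push_cast; linarith
  exact ⟨((Equiv.ofBijective g ⟨hinj, hsurj⟩).toHomeomorphOfContinuousOpen hcont hopen).symm⟩

end Brown

end PartNo2

section PartNo3

open Set Filter Topology

set_option linter.unusedSectionVars false
set_option linter.unusedVariables false
set_option linter.style.haveILetI false
section Colim
variable {T : Type} [TopologicalSpace T]

/-- equivalence relation for the telescope -/
def teleSetoid (h : T → T) (hi : Function.Injective h) : Setoid (ℕ × T) where
  r a b := h^[b.1] a.2 = h^[a.1] b.2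
  iseqv := by
    refine ⟨fun _ => rfl, fun h => h.symm, ?_⟩
    rintro ⟨n, x⟩ ⟨m, y⟩ ⟨k, z⟩ h1 h2
    simp only at h1 h2 ⊢
    apply hi.iterate m
    rw [← Function.iterate_add_apply, add_comm m k, Function.iterate_add_apply, h1,
      ← Function.iterate_add_apply, add_comm k n, Function.iterate_add_apply, h2,
      ← Function.iterate_add_apply, ← Function.iterate_add_apply, add_comm]

/-- the telescope -/
def Tele (h : T → T) (hi : Function.Injective h) : Type := Quotient (teleSetoid h hi)

variable {h : T → T} {hi : Function.Injective h}

instance : TopologicalSpace (Tele h hi) :=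
  inferInstanceAs (TopologicalSpace (Quotient (teleSetoid h hi)))

/-- inclusion of the stages -/
def Tele.ι (h : T → T) (hi : Function.Injective h) (n : ℕ) (x : T) : Tele h hi :=
  Quotient.mk (teleSetoid h hi) (n, x)

lemma Tele.ι_eq {n m : ℕ} {x y : T} : Tele.ι h hi n x = Tele.ι h hi m y ↔ h^[m] x = h^[n] y :=
  Quotient.eq (r := teleSetoid h hi)

lemma Tele.ι_succ (n : ℕ) (x : T) : Tele.ι h hi (n+1) (h x) = Tele.ι h hi n x := by
  rw [Tele.ι_eq, ← Function.iterate_succ_apply]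

lemma Tele.ι_add (n k : ℕ) (x : T) : Tele.ι h hi (n+k) (h^[k] x) = Tele.ι h hi n x := by
  rw [Tele.ι_eq, ← Function.iterate_add_apply]

lemma Tele.exists_ι (p : Tele h hi) : ∃ n x, Tele.ι h hi n x = p := by
  obtain ⟨⟨n, x⟩, rfl⟩ := Quotient.exists_rep p
  exact ⟨n, x, rfl⟩

lemma Tele.ι_inj (n : ℕ) : Function.Injective (Tele.ι h hi n) := fun x y hxy =>
  hi.iterate n (Tele.ι_eq.1 hxy)

lemma Tele.exists_ι_le {m n : ℕ} (hmn : m ≤ n) (x : T) :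
    Tele.ι h hi n (h^[n - m] x) = Tele.ι h hi m x := by
  obtain ⟨k, rfl⟩ := Nat.exists_eq_add_of_le hmn
  rw [Nat.add_sub_cancel_left, Tele.ι_add]

lemma iterate_isOpenEmbedding (ho : IsOpenEmbedding h) (n : ℕ) : IsOpenEmbedding (h^[n]) := by
  induction n with
  | zero => exact IsOpenEmbedding.id
  | succ n ih => exact ih.comp ho

lemma Tele.isOpenMap_mk (ho : IsOpenEmbedding h) :
    IsOpenMap (Quotient.mk (teleSetoid h hi)) := by
  intro U hU
  rw [← isQuotientMap_quotient_mk'.isOpen_preimage (s := Quotient.mk (teleSetoid h hi) '' U)]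
  have : Quotient.mk (teleSetoid h hi) ⁻¹' (Quotient.mk (teleSetoid h hi) '' U) =
      ⋃ (n : ℕ) (m : ℕ), {m} ×ˢ ((h^[n]) ⁻¹' ((h^[m]) '' ((fun x => (n, x)) ⁻¹' U))) := by
    ext ⟨m, y⟩
    simp only [mem_preimage, mem_image, mem_iUnion, mem_prod, mem_singleton_iff, Prod.exists]
    constructor
    · rintro ⟨n, x, hx, hxy⟩
      exact ⟨n, m, rfl, x, hx, Tele.ι_eq.1 hxy⟩
    · rintro ⟨n, m', rfl, x, hx, hxy⟩
      exact ⟨n, x, hx, Tele.ι_eq.2 hxy⟩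
  change IsOpen (Quotient.mk (teleSetoid h hi) ⁻¹' (Quotient.mk (teleSetoid h hi) '' U))
  rw [this]
  refine isOpen_iUnion fun n => isOpen_iUnion fun m => (isOpen_discrete _).prod ?_
  refine IsOpen.preimage (iterate_isOpenEmbedding ho n).continuous ?_
  exact (iterate_isOpenEmbedding ho m).isOpenMap _ (hU.preimage (by fun_prop))

lemma Tele.ι_open (ho : IsOpenEmbedding h) (n : ℕ) : IsOpenEmbedding (Tele.ι h hi n) := by
  refine .of_continuous_injective_isOpenMap ?_ (Tele.ι_inj n) ?_
  · exact continuous_quotient_mk'.comp (by fun_prop : Continuous fun x : T => (n, x))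
  · exact (Tele.isOpenMap_mk ho).comp (fun U hU => by
      have : (fun x : T => (n, x)) '' U = {n} ×ˢ U := by rw [singleton_prod]
      rw [this]; exact (isOpen_discrete _).prod hU)

lemma Tele.t2 [T2Space T] (ho : IsOpenEmbedding h) : T2Space (Tele h hi) := by
  refine ⟨fun p q hpq => ?_⟩
  obtain ⟨n, x, rfl⟩ := p.exists_ι
  obtain ⟨m, y, rfl⟩ := q.exists_ι
  rw [← Tele.exists_ι_le (le_max_left n m) x, ← Tele.exists_ι_le (le_max_right n m) y] at hpq ⊢
  obtain ⟨U, V, hU, hV, hxU, hyV, hUV⟩ := t2_separation (ne_of_apply_ne _ hpq)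
  exact ⟨_, _, (Tele.ι_open ho _).isOpenMap U hU, (Tele.ι_open ho _).isOpenMap V hV,
    ⟨_, hxU, rfl⟩, ⟨_, hyV, rfl⟩, (disjoint_image_iff (Tele.ι_inj _)).2 hUV⟩

lemma Tele.secondCountable [SecondCountableTopology T] (ho : IsOpenEmbedding h) :
    SecondCountableTopology (Tele h hi) :=
  isQuotientMap_quotient_mk'.secondCountableTopology (Tele.isOpenMap_mk ho)

end Colim

/-- charts from open embeddings -/
@[reducible] noncomputable def chartedOf {E X : Type} [TopologicalSpace E] [Nonempty E] [TopologicalSpace X]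
    (H : ∀ p : X, ∃ f : E → X, IsOpenEmbedding f ∧ p ∈ range f) : ChartedSpace E X where
  atlas := univ
  chartAt p := ((H p).choose_spec.1.toOpenPartialHomeomorph _).symm
  mem_chart_source p := by
    simpa using (H p).choose_spec.2
  chart_mem_atlas _ := trivial

/-- the period -/
noncomputable abbrev LL : ℝ := 3 / 2

instance factLL : Fact (0 < LL) := ⟨by norm_num⟩

/-- the open solid torus -/
abbrev TT : Type := AddCircle LL × ℂ

lemma exists_arc : ∃ ψ : ℝ → AddCircle LL, IsOpenEmbedding ψ ∧
    ∀ t : ℝ, |t| < LL / 2 → (t : AddCircle LL) ∈ range ψ := by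
  have hpi := Real.pi_pos
  have hr : ∀ s : ℝ, LL / Real.pi * Real.arctan s ∈ Ioo (-(LL/2)) (LL/2) := by
    intro s
    have h1 := Real.arctan_lt_pi_div_two s
    have h2 := Real.neg_pi_div_two_lt_arctan s
    have hL : 0 < LL / Real.pi := by positivity
    have e : LL / 2 = LL / Real.pi * (Real.pi / 2) := by field_simp
    rw [e, ← mul_neg]
    exact ⟨mul_lt_mul_of_pos_left (by linarith) hL, mul_lt_mul_of_pos_left h1 hL⟩
  have hmono : StrictMono fun s : ℝ => LL / Real.pi * Real.arctan s :=
    Real.arctan_strictMono.const_mul (by positivity)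
  have hcont : Continuous fun s : ℝ => LL / Real.pi * Real.arctan s := by fun_prop
  have hsurj : ∀ t : ℝ, |t| < LL / 2 → ∃ s, LL / Real.pi * Real.arctan s = t := by
    intro t ht
    refine ⟨Real.tan (t * Real.pi / LL), ?_⟩
    rw [abs_lt] at ht
    rw [Real.arctan_tan]
    · field_simp
    · rw [lt_div_iff₀ (by positivity)]; nlinarith
    · rw [div_lt_iff₀ (by positivity)]; nlinarith
  have hrange : range (fun s : ℝ => LL / Real.pi * Real.arctan s) = Ioo (-(LL/2)) (LL/2) := by
    ext t
    constructor
    · rintro ⟨s, rfl⟩; exact hr s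
    · intro ht; exact hsurj t (abs_lt.2 ht)
  have hoe : IsOpenEmbedding fun s : ℝ => LL / Real.pi * Real.arctan s := by
    refine ⟨hmono.isEmbedding_of_ordConnected ?_, ?_⟩
    · rw [hrange]; exact ordConnected_Ioo
    · rw [hrange]; exact isOpen_Ioo
  refine ⟨fun s => ((LL / Real.pi * Real.arctan s : ℝ) : AddCircle LL), ?_, ?_⟩
  · refine .of_continuous_injective_isOpenMap ?_ ?_ ?_
    · exact (AddCircle.continuous_mk' LL).comp hcont
    · intro s s' hss
      apply hmono.injective
      have h1 := hr s
      have h2 := hr s'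
      exact (AddCircle.coe_eq_coe_iff_of_mem_Ico (a := -(LL/2)) ⟨h1.1.le, by linarith [h1.2]⟩
        ⟨h2.1.le, by linarith [h2.2]⟩).1 hss
    · exact QuotientAddGroup.isOpenMap_coe.comp hoe.isOpenMap
  · intro t ht
    obtain ⟨s, hs⟩ := hsurj t ht
    exact ⟨s, by simp only [hs]⟩

lemma TT_chart (p : TT) : ∃ f : EuclideanSpace ℝ (Fin 3) → TT, IsOpenEmbedding f ∧ p ∈ range f := by
  obtain ⟨ψ, hψ, hr⟩ := exists_arc
  let e : EuclideanSpace ℝ (Fin 3) ≃L[ℝ] ℝ × ℂ := ContinuousLinearEquiv.ofFinrankEq (by simp)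
  refine ⟨(Prod.map ((Homeomorph.addLeft p.1) ∘ ψ) id) ∘ e, ?_, ?_⟩
  · exact ((Homeomorph.isOpenEmbedding _).comp hψ |>.prodMap .id).comp
      e.toHomeomorph.isOpenEmbedding
  · rw [EquivLike.range_comp, range_prodMap]
    refine ⟨?_, by simp⟩
    obtain ⟨s, hs⟩ := hr 0 (by norm_num)
    exact ⟨s, by simp [hs]⟩

section engulf
variable {h : TT → TT} {hi : Function.Injective h}

/-- slanting homeomorphism -/
noncomputable def slantA (K : ℝ) : (TT × ℝ) ≃ₜ (TT × ℝ) where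
  toFun p := ((p.1.1 + ((p.2 / K : ℝ) : AddCircle LL), p.1.2), p.2)
  invFun p := ((p.1.1 - ((p.2 / K : ℝ) : AddCircle LL), p.1.2), p.2)
  left_inv p := by simp
  right_inv p := by simp
  continuous_toFun := by
    have : Continuous fun p : TT × ℝ => ((p.2 / K : ℝ) : AddCircle LL) :=
      (AddCircle.continuous_mk' LL).comp (by fun_prop)
    fun_prop
  continuous_invFun := by
    have : Continuous fun p : TT × ℝ => ((p.2 / K : ℝ) : AddCircle LL) :=
      (AddCircle.continuous_mk' LL).comp (by fun_prop)
    fun_prop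

/-- shearing homeomorphism -/
noncomputable def slantB (V : C(TT, ℝ)) : (TT × ℝ) ≃ₜ (TT × ℝ) where
  toFun p := (p.1, p.2 - V p.1)
  invFun p := (p.1, p.2 + V p.1)
  left_inv p := by simp
  right_inv p := by simp
  continuous_toFun := by fun_prop
  continuous_invFun := by fun_prop

lemma engulf (ho : IsOpenEmbedding h) (hb : ∀ p, ‖(h p).2‖ < 2) {X : TT → ℝ} (hX : Continuous X)
    (hXh : ∀ p, (h p).1 = (X p : AddCircle LL)) (C : Set (Tele h hi × ℝ)) (hC : IsCompact C) :
    ∃ f : EuclideanSpace ℝ (Fin 4) → Tele h hi × ℝ, IsOpenEmbedding f ∧ C ⊆ range f := by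
  have := Tele.t2 (hi := hi) ho
  -- find the stage
  obtain ⟨n, hn⟩ : ∃ n, Prod.fst '' C ⊆ Tele.ι h hi n '' {p | ‖p.2‖ < 2} := by
    refine (hC.image continuous_fst).elim_directed_cover
      (fun n => Tele.ι h hi n '' {p | ‖p.2‖ < 2}) ?_ ?_ ?_
    · intro n
      exact (Tele.ι_open ho n).isOpenMap _ (isOpen_lt (by fun_prop) (by fun_prop))
    · intro p _
      obtain ⟨n, x, rfl⟩ := p.exists_ι
      exact mem_iUnion.2 ⟨n + 1, h x, hb x, Tele.ι_succ n x⟩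
    · refine directed_of_isDirected_le ?_
      refine monotone_nat_of_le_succ fun n => ?_
      rintro _ ⟨x, -, rfl⟩
      exact ⟨h x, hb x, Tele.ι_succ n x⟩
  obtain ⟨s, hs⟩ := (hC.image continuous_snd).isBounded.exists_norm_le
  have hs0 : 0 ≤ |s| := abs_nonneg s
  set K : ℝ := 2 * (|s| + 1) / LL with hK
  have hK0 : 0 < K := by positivity
  -- extend X
  have hcomp : IsCompact {p : TT | ‖p.2‖ ≤ 2} := by
    have : {p : TT | ‖p.2‖ ≤ 2} = univ ×ˢ Metric.closedBall (0 : ℂ) 2 := by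
      ext p; simp
    rw [this]
    exact isCompact_univ.prod (isCompact_closedBall _ _)
  obtain ⟨V, hV⟩ : ∃ V : C(TT, ℝ), ∀ p : TT, ‖p.2‖ ≤ 2 → V (h p) = K * X p := by
    have : CompactSpace {p : TT | ‖p.2‖ ≤ 2} := isCompact_iff_compactSpace.1 hcomp
    have hce : IsClosedEmbedding (fun p : {p : TT | ‖p.2‖ ≤ 2} => h p) :=
      (ho.continuous.comp continuous_subtype_val).isClosedEmbedding
        (ho.injective.comp Subtype.val_injective)
    obtain ⟨V, hV⟩ := ContinuousMap.exists_extension' (Y := ℝ) hce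
      ⟨fun p => K * X p.1, by fun_prop⟩
    exact ⟨V, fun p hp => congrFun hV ⟨p, hp⟩⟩
  obtain ⟨ψ, hψ, hr⟩ := exists_arc
  let e : EuclideanSpace ℝ (Fin 4) ≃L[ℝ] (ℝ × ℂ) × ℝ := ContinuousLinearEquiv.ofFinrankEq (by simp)
  refine ⟨(Prod.map (Tele.ι h hi (n+1)) id) ∘ (slantB V ∘ (slantA K ∘
    ((Prod.map (Prod.map ψ id) id) ∘ e))), ?_, ?_⟩
  · exact ((Tele.ι_open ho _).prodMap .id).comp ((slantB V).isOpenEmbedding.comp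
      ((slantA K).isOpenEmbedding.comp (((hψ.prodMap .id).prodMap .id).comp
      e.toHomeomorph.isOpenEmbedding)))
  · rintro ⟨p, t⟩ hp
    obtain ⟨x, hx, hxp⟩ := hn ⟨_, hp, rfl⟩
    simp only at hxp
    have ht := hs _ ⟨_, hp, rfl⟩
    simp only [Real.norm_eq_abs] at ht
    have hx' : ‖x.2‖ < 2 := hx
    have hlt : |(-(t / K))| < LL / 2 := by
      rw [abs_neg, abs_div, abs_of_pos hK0, div_lt_iff₀ hK0, hK]
      have : LL / 2 * (2 * (|s| + 1) / LL) = |s| + 1 := by field_simp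
      rw [this]
      have := le_abs_self s
      linarith
    obtain ⟨u, hu⟩ := hr _ hlt
    refine ⟨e.symm ((u, (h x).2), t + K * X x), ?_⟩
    simp only [Function.comp, ContinuousLinearEquiv.apply_symm_apply, Prod.map, id]
    have h1 : ψ u + (((t + K * X x) / K : ℝ) : AddCircle LL) = (h x).1 := by
      rw [hu, hXh, ← AddCircle.coe_add]
      congr 1
      field_simp
      ring
    have h2 : slantA K ((ψ u, (h x).2), t + K * X x) = (h x, t + K * X x) := by
      simp only [slantA, Homeomorph.homeomorph_mk_coe, Equiv.coe_fn_mk, h1]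
    have h3 : slantB V (h x, t + K * X x) = (h x, t) := by
      simp only [slantB, Homeomorph.homeomorph_mk_coe, Equiv.coe_fn_mk, hV x hx'.le]
      simp
    rw [h2, h3]
    simp only [Tele.ι_succ, hxp]

lemma Tele_chart (ho : IsOpenEmbedding h) (p : Tele h hi) :
    ∃ f : EuclideanSpace ℝ (Fin 3) → Tele h hi, IsOpenEmbedding f ∧ p ∈ range f := by
  obtain ⟨n, x, rfl⟩ := p.exists_ι
  obtain ⟨f, hf, y, hy⟩ := TT_chart x
  exact ⟨Tele.ι h hi n ∘ f, (Tele.ι_open ho n).comp hf, y, by simp [hy]⟩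

theorem Tele_prod (ho : IsOpenEmbedding h) (hb : ∀ p, ‖(h p).2‖ < 2) {X : TT → ℝ}
    (hX : Continuous X) (hXh : ∀ p, (h p).1 = (X p : AddCircle LL)) :
    Nonempty ((Tele h hi × ℝ) ≃ₜ EuclideanSpace ℝ (Fin 4)) := by
  have := Tele.t2 (hi := hi) ho
  have := Tele.secondCountable (hi := hi) ho
  let _ := chartedOf (Tele_chart (hi := hi) ho)
  have : LocallyCompactSpace (Tele h hi) :=
    ChartedSpace.locallyCompactSpace (EuclideanSpace ℝ (Fin 3)) _
  exact brown (engulf ho hb hX hXh)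

end engulf

end PartNo3

section PartNo4

open Set Filter Topology

lemma R3_sci : SimplyConnectedAtInfinity (EuclideanSpace ℝ (Fin 3)) := by
  intro k hk
  obtain ⟨R0, hR0⟩ := hk.isBounded.exists_norm_le
  set R := max R0 0 with hRdef
  have hR : 0 ≤ R := le_max_right _ _
  have hkR : ∀ x ∈ k, ‖x‖ ≤ R := fun x hx => (hR0 x hx).trans (le_max_left _ _)
  refine ⟨Metric.closedBall 0 (R + 2), isCompact_closedBall _ _, fun x hx => ?_, ?_⟩
  · have := hkR x hx
    simp; linarith
  intro γ hγ hγK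
  have hγn : ∀ z, R + 2 < ‖γ z‖ := fun z => by simpa using hγK z
  have : TietzeExtension (EuclideanSpace ℝ (Fin 3)) := TietzeExtension.of_tvs ℝ
  obtain ⟨G0, hG0⟩ := ContinuousMap.exists_extension' (Y := EuclideanSpace ℝ (Fin 3))
    (Metric.isClosed_sphere (x := (0 : EuclideanSpace ℝ (Fin 2))) (ε := 1)).isClosedEmbedding_subtypeVal
    ⟨γ, hγ⟩
  have hG0' : ∀ z hz, G0 z = γ ⟨z, hz⟩ := fun z hz => congrFun hG0 ⟨z, hz⟩
  obtain ⟨G1, hG1, hap, -⟩ := G0.continuous.exists_contDiff_approx 1 (ε := fun _ => 1/2)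
    continuous_const (fun _ => by norm_num)
  have hdense := ContDiff.dense_compl_range_of_finrank_lt_finrank hG1 (by simp)
  obtain ⟨v, hv, hvb⟩ := hdense.exists_dist_lt 0 (show (0:ℝ) < 1/4 by norm_num)
  have hvb : ‖v‖ < 1/4 := by simpa using hvb
  let χ : EuclideanSpace ℝ (Fin 2) → ℝ := fun p => max 0 (min 1 (2 - ‖G0 p‖))
  have hχ : Continuous χ := by fun_prop
  have hχ0 : ∀ p, 0 ≤ χ p := fun p => le_max_left _ _
  have hχ1 : ∀ p, χ p ≤ 1 := fun p => max_le (by norm_num) (min_le_left _ _)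
  let G : EuclideanSpace ℝ (Fin 2) → EuclideanSpace ℝ (Fin 3) := fun p =>
    G0 p + χ p • (G1 p - G0 p)
  have hG : Continuous G := by
    have := hG1.continuous
    fun_prop
  have hGv : ∀ p, G p - v ≠ 0 := by
    intro p hp
    rw [sub_eq_zero] at hp
    rcases le_or_gt ‖G0 p‖ 1 with h1 | h1
    · have : χ p = 1 := by
        simp only [χ]; rw [min_eq_left (by linarith)]; norm_num
      simp only [G, this, one_smul, add_sub_cancel] at hp
      exact hv ⟨p, hp⟩
    · have h2 : ‖G0 p‖ ≤ ‖G p‖ + 1/2 := by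
        have e : G0 p = G p - χ p • (G1 p - G0 p) := by simp [G]
        have h3 : ‖χ p • (G1 p - G0 p)‖ ≤ 1/2 := by
          rw [norm_smul, Real.norm_of_nonneg (hχ0 p)]
          have := hap p
          rw [dist_eq_norm] at this
          have h4 := mul_le_mul (hχ1 p) this.le (norm_nonneg _) zero_le_one
          linarith
        calc ‖G0 p‖ = ‖G p - χ p • (G1 p - G0 p)‖ := by rw [← e]
          _ ≤ _ := norm_sub_le _ _
          _ ≤ _ := by linarith
      rw [hp] at h2
      linarith
  have hGb : ∀ z hz, G z = γ ⟨z, hz⟩ := by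
    intro z hz
    have h1 : χ z = 0 := by
      have := hγn ⟨z, hz⟩
      rw [← hG0' z hz] at this
      simp only [χ]
      exact max_eq_left ((min_le_right _ _).trans (by linarith))
    simp [G, h1, hG0' z hz]
  refine ⟨fun z => v + max 1 ((R + 1) / ‖G z - v‖) • (G z - v), ?_, ?_, ?_⟩
  · have : Continuous fun z : Metric.closedBall (0 : EuclideanSpace ℝ (Fin 2)) 1 =>
        (R + 1) / ‖G z - v‖ :=
      Continuous.div (by fun_prop) (by fun_prop) (fun z => norm_ne_zero_iff.2 (hGv z))
    fun_prop
  · intro z hz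
    have h1 := hkR _ hz
    have h0 : 0 < ‖G z - v‖ := norm_pos_iff.2 (hGv z)
    have h2 : R + 1 ≤ ‖max 1 ((R + 1) / ‖G z - v‖) • (G z - v)‖ := by
      rw [norm_smul, Real.norm_of_nonneg (by positivity)]
      rw [← div_le_iff₀ h0]
      exact le_max_right _ _
    set y := max 1 ((R + 1) / ‖G z - v‖) • (G z - v)
    have h3 : ‖y‖ ≤ ‖v + y‖ + ‖v‖ := by
      have := norm_sub_le (v + y) v
      simpa using this
    linarith
  · intro z hz
    have h1 := hγn ⟨z, hz⟩
    simp only [hGb z hz]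
    have h2 : ‖γ ⟨z, hz⟩‖ ≤ ‖γ ⟨z, hz⟩ - v‖ + ‖v‖ := by
      have := norm_add_le (γ ⟨z, hz⟩ - v) v
      simpa using this
    rw [max_eq_left, one_smul, add_sub_cancel]
    rw [div_le_one (by linarith)]
    linarith

lemma sci_of_homeo {X Y : Type*} [TopologicalSpace X] [TopologicalSpace Y] (e : X ≃ₜ Y)
    (h : SimplyConnectedAtInfinity Y) : SimplyConnectedAtInfinity X := by
  intro k hk
  obtain ⟨K, hK, hkK, H⟩ := h (e '' k) (hk.image e.continuous)
  refine ⟨e ⁻¹' K, e.isCompact_preimage.2 hK, image_subset_iff.1 hkK, ?_⟩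
  intro γ hγ hγK
  obtain ⟨D, hD, hDk, hDb⟩ := H (fun z => e (γ z)) (e.continuous.comp hγ) hγK
  refine ⟨fun z => e.symm (D z), e.symm.continuous.comp hD, fun z hz => ?_, fun z hz => ?_⟩
  · exact hDk z ⟨_, hz, by simp⟩
  · simp [hDb z hz]

end PartNo4

section PartNo5

open Set Filter Topology

/-- squash of the plane into a small ball -/
noncomputable def sqh (w : ℂ) : ℂ := (1 / 100 : ℝ) • (OpenPartialHomeomorph.univUnitBall w : ℂ)

lemma sqh_open : IsOpenEmbedding sqh := by
  have h1 : IsOpenEmbedding (OpenPartialHomeomorph.univUnitBall : OpenPartialHomeomorph ℂ ℂ) :=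
    OpenPartialHomeomorph.isOpenEmbedding _ rfl
  have h2 := (Homeomorph.smulOfNeZero (1/100 : ℝ) (by norm_num) : ℂ ≃ₜ ℂ).isOpenEmbedding
  exact h2.comp h1

@[fun_prop] lemma sqh_cont : Continuous sqh := sqh_open.continuous

lemma sqh_apply (w : ℂ) : sqh w = (((1 / 100) * (√(1 + ‖w‖ ^ 2))⁻¹ : ℝ) : ℂ) * w := by
  simp [sqh, OpenPartialHomeomorph.univUnitBall_apply, mul_assoc]

lemma sqh_norm (w : ℂ) : ‖sqh w‖ < 1 / 100 := by
  have h1 : (OpenPartialHomeomorph.univUnitBall w : ℂ) ∈ Metric.ball (0:ℂ) 1 :=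
    OpenPartialHomeomorph.univUnitBall.map_source (mem_univ w)
  rw [sqh, norm_smul]
  have h2 : ‖(OpenPartialHomeomorph.univUnitBall w : ℂ)‖ < 1 := by simpa using h1
  norm_num at *
  linarith

lemma sqh_re (w : ℂ) : |(sqh w).re| < 1 / 100 := (Complex.abs_re_le_norm _).trans_lt (sqh_norm w)
lemma sqh_im (w : ℂ) : |(sqh w).im| < 1 / 100 := (Complex.abs_im_le_norm _).trans_lt (sqh_norm w)

/-- planar part -/
noncomputable def hz (p : TT) : ℂ := (Real.exp (sqh p.2).re : ℂ) * (AddCircle.toCircle p.1 : ℂ)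

/-- the embedding of the solid torus in itself -/
noncomputable def hh (p : TT) : TT :=
  (((hz p).re : AddCircle LL), ⟨(hz p).im, (hz p).re * (hz p).im + (sqh p.2).im⟩)

@[fun_prop] lemma hz_cont : Continuous hz := by
  have := sqh_open.continuous
  have h2 : Continuous fun p : TT => (AddCircle.toCircle p.1 : ℂ) :=
    continuous_subtype_val.comp (AddCircle.continuous_toCircle.comp continuous_fst)
  have h3 : Continuous fun p : TT => (Real.exp (sqh p.2).re : ℂ) :=
    Complex.continuous_ofReal.comp (Real.continuous_exp.comp
      (Complex.continuous_re.comp (sqh_cont.comp continuous_snd)))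
  exact h3.mul h2

lemma hz_norm (p : TT) : ‖hz p‖ = Real.exp (sqh p.2).re := by
  rw [hz, norm_mul, Circle.norm_coe, mul_one]; simp

lemma hz_sq (p : TT) : (hz p).re ^ 2 + (hz p).im ^ 2 = Real.exp (sqh p.2).re ^ 2 := by
  rw [← hz_norm, ← Complex.normSq_eq_norm_sq, Complex.normSq_apply]; ring

lemma exp_bounds (w : ℂ) : 98/100 < Real.exp (sqh w).re ∧ Real.exp (sqh w).re < 102/100 := by
  have h := sqh_re w
  have := Real.abs_exp_sub_one_le (x := (sqh w).re) (by linarith)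
  rw [abs_le] at this
  constructor <;> linarith

lemma hz_mk (t : ℝ) (w : ℂ) : hz ((t : AddCircle LL), w) =
    Complex.exp ⟨(sqh w).re, 2 * Real.pi / LL * t⟩ := by
  rw [Complex.mk_eq_add_mul_I]
  rw [hz, AddCircle.toCircle_apply_mk, Circle.coe_exp, Complex.exp_add, Complex.ofReal_exp]

lemma hh_cont : Continuous hh := by
  have h1 := hz_cont
  have h2 := sqh_open.continuous
  have h3 : Continuous fun p : TT => ((hz p).re : AddCircle LL) :=
    (AddCircle.continuous_mk' LL).comp (Complex.continuous_re.comp hz_cont)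
  have h4 : Continuous fun p : TT =>
      (⟨(hz p).im, (hz p).re * (hz p).im + (sqh p.2).im⟩ : ℂ) := by
    have := Complex.equivRealProdCLM.symm.continuous
    exact this.comp (f := fun p : TT => ((hz p).im, (hz p).re * (hz p).im + (sqh p.2).im))
      ((Complex.continuous_im.comp hz_cont).prodMk
        (((Complex.continuous_re.comp hz_cont).mul (Complex.continuous_im.comp hz_cont)).add
          (Complex.continuous_im.comp (sqh_cont.comp continuous_snd))))
  exact h3.prodMk h4

lemma num_sep {x y v v' A A' : ℝ} (h1 : x ^ 2 + y ^ 2 = A) (h2 : (x + 3/2) ^ 2 + y ^ 2 = A')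
    (h3 : x * y + v = (x + 3/2) * y + v') (a1 : 96/100 < A) (a2 : A < 105/100)
    (a1' : 96/100 < A') (a2' : A' < 105/100) (hv : |v| < 1/100) (hv' : |v'| < 1/100) : False := by
  rw [abs_lt] at hv hv'
  have hy1 : y < 2/100 := by linarith
  have hy2 : -(2/100) < y := by linarith
  have hx3 : x < -(7/10) := by linarith
  have hx4 : -(8/10) < x := by linarith
  have hy3 : y ^ 2 < 1/100 := by nlinarith
  have hx5 : x ^ 2 < 7/10 := by nlinarith
  linarith

lemma hz_sq_bd (p : TT) : 96/100 < Real.exp (sqh p.2).re ^ 2 ∧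
    Real.exp (sqh p.2).re ^ 2 < 105/100 := by
  obtain ⟨b1, b2⟩ := exp_bounds p.2
  constructor <;> nlinarith

lemma hz_re_bd (p : TT) : |(hz p).re| < 11/10 := by
  have e1 := hz_sq p
  have := hz_sq_bd p
  have := sq_nonneg (hz p).im
  apply abs_lt_of_sq_lt_sq _ (by norm_num)
  linarith

lemma hh_k (p p' : TT) (k : ℤ) (hk : (hz p').re = (hz p).re + k * (3/2))
    (hy : (hz p).im = (hz p').im)
    (hzz : (hz p).re * (hz p).im + (sqh p.2).im = (hz p').re * (hz p').im + (sqh p'.2).im) :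
    k = 0 := by
  have e1 := hz_sq p
  have e2 := hz_sq p'
  have b1 := hz_sq_bd p
  have b2 := hz_sq_bd p'
  have hv := sqh_im p.2
  have hv' := sqh_im p'.2
  have r1 := abs_lt.1 (hz_re_bd p)
  have r2 := abs_lt.1 (hz_re_bd p')
  have hklt : k < 2 := by
    have : (k : ℝ) < 2 := by linarith
    exact_mod_cast this
  have hkgt : -2 < k := by
    have : (-2 : ℝ) < k := by linarith
    exact_mod_cast this
  have hcase : k = 0 ∨ k = 1 ∨ k = -1 := by omega
  rcases hcase with h | h | h
  · exact h
  · exfalso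
    rw [h] at hk
    push_cast at hk
    rw [← hy, hk, one_mul] at e2 hzz
    exact num_sep e1 e2 hzz b1.1 b1.2 b2.1 b2.2 hv hv'
  · exfalso
    rw [h] at hk
    push_cast at hk
    have hk' : (hz p).re = (hz p').re + 3/2 := by linarith
    rw [hy, hk'] at e1 hzz
    exact num_sep e2 e1 hzz.symm b2.1 b2.2 b1.1 b1.2 hv' hv

lemma hh_inj : Function.Injective hh := by
  rintro p p' hpp
  have hx : ((hz p).re : AddCircle LL) = ((hz p').re : AddCircle LL) := congrArg Prod.fst hpp
  have hy : (hz p).im = (hz p').im := congrArg (fun q => q.2.re) hpp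
  have hzz : (hz p).re * (hz p).im + (sqh p.2).im = (hz p').re * (hz p').im + (sqh p'.2).im :=
    congrArg (fun q => q.2.im) hpp
  obtain ⟨k, hk⟩ : ∃ k : ℤ, k • LL = (hz p').re - (hz p).re := by
    rw [← AddCircle.coe_eq_zero_iff, AddCircle.coe_sub, hx, sub_self]
  have hk1 : (hz p').re = (hz p).re + k * (3/2) := by
    rw [zsmul_eq_mul] at hk; simp only [LL] at hk; linarith
  have hk0 := hh_k p p' k hk1 hy hzz
  rw [hk0, zero_smul] at hk
  have hre : (hz p).re = (hz p').re := by linarith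
  have hze : hz p = hz p' := Complex.ext hre hy
  have hu : (sqh p.2).re = (sqh p'.2).re := by
    have := congrArg norm hze
    rwa [hz_norm, hz_norm, Real.exp_eq_exp] at this
  have hvv : (sqh p.2).im = (sqh p'.2).im := by rw [hre, hy] at hzz; linarith
  have hw : p.2 = p'.2 := sqh_open.injective (Complex.ext hu hvv)
  have hθ : p.1 = p'.1 := by
    rw [hz, hz, hu] at hze
    have h0 : (Real.exp (sqh p'.2).re : ℂ) ≠ 0 := by exact_mod_cast (Real.exp_pos _).ne'
    exact AddCircle.injective_toCircle (by norm_num) (Circle.ext (mul_left_cancel₀ h0 hze))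
  exact Prod.ext hθ hw

/-- covering map -/
noncomputable def cov (P : ℝ × ℂ) : TT := ((P.1 : AddCircle LL), P.2)

lemma cov_cont : Continuous cov :=
  ((AddCircle.continuous_mk' LL).comp continuous_fst).prodMk continuous_snd

lemma cov_open : IsOpenMap cov :=
  (QuotientAddGroup.isOpenMap_coe (N := AddSubgroup.zmultiples LL)).prodMap IsOpenMap.id

lemma cov_surj : Function.Surjective cov := by
  rintro ⟨a, w⟩
  obtain ⟨x, rfl⟩ := QuotientAddGroup.mk_surjective a
  exact ⟨(x, w), rfl⟩

/-- shear -/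
noncomputable def shearH : (ℂ × ℝ) ≃ₜ (ℝ × ℂ) where
  toFun q := (q.1.re, ⟨q.1.im, q.1.re * q.1.im + q.2⟩)
  invFun P := (⟨P.1, P.2.re⟩, P.2.im - P.1 * P.2.re)
  left_inv q := by ext <;> simp
  right_inv P := by ext <;> simp
  continuous_toFun := by
    refine Continuous.prodMk (by fun_prop) ?_
    exact Complex.equivRealProdCLM.symm.continuous.comp
      (f := fun q : ℂ × ℝ => (q.1.im, q.1.re * q.1.im + q.2)) (by fun_prop)
  continuous_invFun := by
    refine Continuous.prodMk ?_ (by fun_prop)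
    exact Complex.equivRealProdCLM.symm.continuous.comp
      (f := fun P : ℝ × ℂ => (P.1, P.2.re)) (by fun_prop)

/-- linear rearrangement -/
noncomputable def rearr : (ℝ × ℂ) ≃ₜ (ℂ × ℝ) where
  toFun P := (⟨P.2.re, 2 * Real.pi / LL * P.1⟩, P.2.im)
  invFun q := (LL / (2 * Real.pi) * q.1.im, ⟨q.1.re, q.2⟩)
  left_inv P := by
    have := Real.pi_pos
    refine Prod.ext ?_ (Complex.ext rfl rfl)
    simp only
    field_simp
  right_inv q := by
    have := Real.pi_pos
    refine Prod.ext (Complex.ext rfl ?_) rfl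
    simp only
    field_simp
  continuous_toFun := by
    refine Continuous.prodMk ?_ (by fun_prop)
    exact Complex.equivRealProdCLM.symm.continuous.comp
      (f := fun P : ℝ × ℂ => (P.2.re, 2 * Real.pi / LL * P.1)) (by fun_prop)
  continuous_invFun := by
    refine Continuous.prodMk (by fun_prop) ?_
    exact Complex.equivRealProdCLM.symm.continuous.comp
      (f := fun q : ℂ × ℝ => (q.1.re, q.2)) (by fun_prop)

lemma hh_openMap : IsOpenMap hh := by
  have e : hh ∘ cov = cov ∘ shearH ∘ (Prod.map Complex.exp id) ∘ rearr ∘ (Prod.map id sqh) := by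
    funext P
    obtain ⟨t, w⟩ := P
    simp only [Function.comp, Prod.map, id, cov, hh, hz_mk]
    rfl
  have : IsOpenMap (hh ∘ cov) := by
    rw [e]
    exact cov_open.comp (shearH.isOpenMap.comp ((Complex.isOpenMap_exp.prodMap .id).comp
      (rearr.isOpenMap.comp (IsOpenMap.id.prodMap sqh_open.isOpenMap))))
  intro U hU
  have h2 := this _ (hU.preimage cov_cont)
  rwa [image_comp, image_preimage_eq _ cov_surj] at h2

lemma hh_open : IsOpenEmbedding hh :=
  .of_continuous_injective_isOpenMap hh_cont hh_inj hh_openMap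

lemma hh_bd (p : TT) : ‖(hh p).2‖ < 2 := by
  have e1 := hz_sq p
  obtain ⟨b1, b2⟩ := exp_bounds p.2
  have hv := sqh_im p.2
  rw [abs_lt] at hv
  have : ‖(hh p).2‖ ^ 2 < 2 ^ 2 := by
    rw [← Complex.normSq_eq_norm_sq, Complex.normSq_apply]
    simp only [hh]
    set x := (hz p).re
    set y := (hz p).im
    have h1 : x * y ≤ 6/10 := by nlinarith [sq_nonneg (x - y)]
    have h2 : -(6/10) ≤ x * y := by nlinarith [sq_nonneg (x + y)]
    nlinarith
  exact lt_of_pow_lt_pow_left₀ 2 (by norm_num) this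

/-- the Whitehead manifold -/
abbrev WW : Type := Tele hh hh_inj

theorem WW_prod : Nonempty ((WW × ℝ) ≃ₜ EuclideanSpace ℝ (Fin 4)) :=
  Tele_prod hh_open hh_bd (X := fun p => (hz p).re) (Complex.continuous_re.comp hz_cont)
    (fun _ => rfl)

end PartNo5

section PartNo6

open Set Filter Topology

/-- the finite group used for the holonomy -/
abbrev GG : Type := Equiv.Perm (Fin 5)

/-- make a permutation from two lists of values -/
def gA0 : GG := ⟨![1,2,3,4,0], ![4,0,1,2,3], by decide, by decide⟩
def gL : GG := ⟨![2,0,4,1,3], ![1,3,0,4,2], by decide, by decide⟩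
def gB0 : GG := ⟨![3,0,4,2,1], ![1,4,3,0,2], by decide, by decide⟩
def gA1 : GG := gL * gA0 * gL⁻¹
def gB1 : GG := gL * gB0 * gL⁻¹
def gK : GG := ⟨![0,4,1,3,2], ![0,2,4,3,1], by decide, by decide⟩
def gM : GG := gB0 * gA0⁻¹
def gLam : GG := gL⁻¹ * gA0 * gL * gB1

lemma rel1 : gB1 = gA0⁻¹ * gA1 * gA0 := by decide
lemma rel2 : gA0 = gB1⁻¹ * gB0 * gB1 := by decide
lemma relm : gK * gM * gK⁻¹ = gA0⁻¹ := by decide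
lemma rell : gK * gL * gK⁻¹ = gLam := by decide
lemma gM_ne : gM ≠ 1 := by decide

/-- conditional power -/
def pw (g : GG) (b : Bool) : GG := cond b g 1

/-- transition table -/
def Tt (y a0 a1 : Bool) : GG := cond y (pw gA1 a1 * pw gA0 a0) (pw gB0 a0 * pw gB1 a1)

/-- cylinder functions, centre shifted by `d` -/
def ee (d : ℝ) (P : ℝ × ℂ) : ℝ := (P.1 - d) ^ 2 + P.2.re ^ 2 - 1
def ss (d : ℝ) (P : ℝ × ℂ) : ℝ := P.2.im - (P.1 - d) * P.2.re

@[fun_prop] lemma ee_cont (d : ℝ) : Continuous (ee d) := by unfold ee; fun_prop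
@[fun_prop] lemma ss_cont (d : ℝ) : Continuous (ss d) := by unfold ss; fun_prop

/-- sign bit -/
noncomputable def ng (x : ℝ) : Bool := decide (x < 0)

lemma ng_true {x : ℝ} (h : x < 0) : ng x = true := by simp [ng, h]
lemma ng_false {x : ℝ} (h : 0 ≤ x) : ng x = false := by simp [ng, h]

lemma ev_ng {X : Type*} [TopologicalSpace X] {f : X → ℝ} {x : X} (hf : Continuous f)
    (h : f x ≠ 0) : ∀ᶠ y in 𝓝 x, ng (f y) = ng (f x) := by
  rcases lt_or_gt_of_ne h with h | h
  · filter_upwards [hf.continuousAt.eventually_lt_const h] with y hy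
    rw [ng_true hy, ng_true h]
  · filter_upwards [hf.continuousAt.eventually_const_lt h] with y hy
    rw [ng_false hy.le, ng_false (le_of_lt h)]

/-- basic table at a point -/
noncomputable def tt (P Q : ℝ × ℂ) : GG :=
  Tt (ng (-P.2.re)) (ng (ee 0 Q) && ng (ss 0 P)) (ng (ee (3/2) Q) && ng (ss (3/2) P))

noncomputable def c0 (P Q : ℝ × ℂ) : GG := (tt P P)⁻¹ * tt P Q

lemma as_aux {P Q R : ℝ × ℂ} (h : tt P Q * (tt Q Q)⁻¹ * tt Q R = tt P R) :
    c0 P Q * c0 Q R = c0 P R := by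
  unfold c0; rw [← h]; group

lemma tab1 : ∀ b σ σ' y y' : Bool, Tt y (σ && b) b * (Tt y' (σ && b) b)⁻¹ * Tt y' (σ' && b) b =
    Tt y (σ' && b) b := by decide
lemma tab2 : ∀ b σ σ' y y' : Bool, Tt y b (σ && b) * (Tt y' b (σ && b))⁻¹ * Tt y' b (σ' && b) =
    Tt y b (σ' && b) := by decide
lemma tab3 : ∀ a a' b b' : Bool, Tt true a b * (Tt true a b')⁻¹ * Tt true a' b' =
    Tt true a' b := by decide
lemma tab4 : ∀ a a' b b' : Bool, Tt false a b * (Tt false a' b)⁻¹ * Tt false a' b' =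
    Tt false a b' := by decide

lemma c0_as (P0 : ℝ × ℂ) (hx0 : 0 ≤ P0.1) (hx1 : P0.1 < 3/2)
    (h0 : ¬ (ee 0 P0 = 0 ∧ ss 0 P0 = 0)) (h1 : ¬ (ee (3/2) P0 = 0 ∧ ss (3/2) P0 = 0)) :
    ∃ U ∈ 𝓝 P0, ∀ P ∈ U, ∀ Q ∈ U, ∀ R ∈ U, c0 P Q * c0 Q R = c0 P R := by
  suffices h : ∃ U ∈ 𝓝 P0, ∀ P ∈ U, ∀ Q ∈ U, ∀ R ∈ U,
      tt P Q * (tt Q Q)⁻¹ * tt Q R = tt P R by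
    obtain ⟨U, hU, h⟩ := h
    exact ⟨U, hU, fun P hP Q hQ R hR => as_aux (h P hP Q hQ R hR)⟩
  have hyc : Continuous fun P : ℝ × ℂ => -P.2.re := by fun_prop
  have hs : ss (3/2) P0 = ss 0 P0 + 3/2 * P0.2.re := by unfold ss; ring
  by_cases e0 : ee 0 P0 = 0
  · have s0 : ss 0 P0 ≠ 0 := fun h => h0 ⟨e0, h⟩
    have E0 := ev_ng (ss_cont 0) s0
    by_cases e1 : ee (3/2) P0 = 0
    · have s1 : ss (3/2) P0 ≠ 0 := fun h => h1 ⟨e1, h⟩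
      have E1 := ev_ng (ss_cont (3/2)) s1
      have hy : -P0.2.re ≠ 0 := by
        intro hy
        have hy : P0.2.re = 0 := by linarith
        simp only [ee, hy] at e0 e1
        nlinarith
      refine ⟨_, (E0.and (E1.and (ev_ng hyc hy))), ?_⟩
      rintro P ⟨p1, p2, p3⟩ Q ⟨q1, q2, q3⟩ R -
      unfold tt
      rw [p1, p2, p3, q1, q2, q3]
      group
    · have E1 := ev_ng (ee_cont (3/2)) e1
      rcases lt_trichotomy P0.2.re 0 with hy | hy | hy
      · have hy' : -P0.2.re ≠ 0 := by linarith
        by_cases s1 : ss (3/2) P0 = 0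
        · have hp : 0 ≤ ss 0 P0 := by linarith
          refine ⟨_, (E0.and (E1.and (ev_ng hyc hy'))), ?_⟩
          rintro P ⟨p1, p2, p3⟩ Q ⟨q1, q2, q3⟩ R ⟨r1, r2, r3⟩
          unfold tt
          rw [p1, p3, q1, q2, q3, r2, ng_false hp]
          simp
        · refine ⟨_, (E0.and ((ev_ng (ss_cont (3/2)) s1).and (ev_ng hyc hy'))), ?_⟩
          rintro P ⟨p1, p2, p3⟩ Q ⟨q1, q2, q3⟩ R -
          unfold tt
          rw [p1, p2, p3, q1, q2, q3]
          group
      · have hx : P0.1 = 1 := by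
          simp only [ee, hy] at e0
          nlinarith
        have he : ee (3/2) P0 < 0 := by simp only [ee, hy, hx]; norm_num
        have s1 : ss (3/2) P0 ≠ 0 := by rw [hs, hy]; simpa using s0
        have hss : ss (3/2) P0 = ss 0 P0 := by rw [hs, hy]; ring
        refine ⟨_, (E0.and (E1.and (ev_ng (ss_cont (3/2)) s1))), ?_⟩
        rintro P ⟨p1, p2, p3⟩ Q ⟨q1, q2, q3⟩ R ⟨r1, r2, r3⟩
        unfold tt
        rw [p1, p3, q1, q2, q3, r2, ng_true he, hss]
        simp only [Bool.true_and]
        apply tab1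
      · have hy' : -P0.2.re ≠ 0 := by linarith
        refine ⟨_, (E0.and (E1.and (ev_ng hyc hy'))), ?_⟩
        rintro P ⟨p1, p2, p3⟩ Q ⟨q1, q2, q3⟩ R ⟨r1, r2, r3⟩
        unfold tt
        rw [p1, p3, q1, q2, q3, r2, ng_true (by linarith : -P0.2.re < 0)]
        apply tab3
  · have E0 := ev_ng (ee_cont 0) e0
    by_cases e1 : ee (3/2) P0 = 0
    · have s1 : ss (3/2) P0 ≠ 0 := fun h => h1 ⟨e1, h⟩
      have E1 := ev_ng (ss_cont (3/2)) s1
      rcases lt_trichotomy P0.2.re 0 with hy | hy | hy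
      · have hy' : -P0.2.re ≠ 0 := by linarith
        refine ⟨_, (E0.and (E1.and (ev_ng hyc hy'))), ?_⟩
        rintro P ⟨p1, p2, p3⟩ Q ⟨q1, q2, q3⟩ R ⟨r1, r2, r3⟩
        unfold tt
        rw [p2, p3, q1, q2, q3, r1, ng_false (by linarith : 0 ≤ -P0.2.re)]
        apply tab4
      · have hx : P0.1 = 1/2 := by
          simp only [ee, hy] at e1
          nlinarith
        have he : ee 0 P0 < 0 := by simp only [ee, hy, hx]; norm_num
        have s0 : ss 0 P0 ≠ 0 := by rw [hs, hy] at s1; simpa using s1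
        have hss : ss (3/2) P0 = ss 0 P0 := by rw [hs, hy]; ring
        refine ⟨_, (E0.and (E1.and (ev_ng (ss_cont 0) s0))), ?_⟩
        rintro P ⟨p1, p2, p3⟩ Q ⟨q1, q2, q3⟩ R ⟨r1, r2, r3⟩
        unfold tt
        rw [p2, p3, q1, q2, q3, r1, ng_true he, hss]
        simp only [Bool.true_and]
        apply tab2
      · have hy' : -P0.2.re ≠ 0 := by linarith
        by_cases s0 : ss 0 P0 = 0
        · have hp : 0 ≤ ss (3/2) P0 := by linarith
          refine ⟨_, (E0.and (E1.and (ev_ng hyc hy'))), ?_⟩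
          rintro P ⟨p1, p2, p3⟩ Q ⟨q1, q2, q3⟩ R ⟨r1, r2, r3⟩
          unfold tt
          rw [p2, p3, q1, q2, q3, r1, ng_false hp]
          simp
        · refine ⟨_, (E1.and ((ev_ng (ss_cont 0) s0).and (ev_ng hyc hy'))), ?_⟩
          rintro P ⟨p1, p2, p3⟩ Q ⟨q1, q2, q3⟩ R -
          unfold tt
          rw [p1, p2, p3, q1, q2, q3]
          group
    · have E1 := ev_ng (ee_cont (3/2)) e1
      refine ⟨_, (E0.and E1), ?_⟩
      rintro P ⟨p1, p2⟩ Q ⟨q1, q2⟩ R ⟨r1, r2⟩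
      unfold tt
      rw [q1, q2, r1, r2]
      group

/-- translation -/
noncomputable def tr (a : ℝ) (P : ℝ × ℂ) : ℝ × ℂ := (P.1 + a, P.2)

lemma tr_tr (a b : ℝ) (P : ℝ × ℂ) : tr a (tr b P) = tr (b + a) P := by simp [tr, add_assoc]
lemma ee_tr (d a : ℝ) (P : ℝ × ℂ) : ee d (tr a P) = ee (d - a) P := by simp only [ee, tr]; ring
lemma ss_tr (d a : ℝ) (P : ℝ × ℂ) : ss d (tr a P) = ss (d - a) P := by simp only [ss, tr]; ring

/-- fundamental domain index -/
noncomputable def nn (P : ℝ × ℂ) : ℤ := ⌊P.1 / (3/2)⌋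

lemma nn_tr (k : ℤ) (P : ℝ × ℂ) : nn (tr (k * (3/2)) P) = nn P + k := by
  simp only [nn, tr]
  rw [add_div, mul_div_cancel_right₀ _ (by norm_num), Int.floor_add_intCast]

lemma nn_eq {P : ℝ × ℂ} {k : ℤ} (h1 : k * (3/2) ≤ P.1) (h2 : P.1 < (k + 1) * (3/2)) : nn P = k := by
  rw [nn, Int.floor_eq_iff]
  constructor
  · rw [le_div_iff₀ (by norm_num)]; exact h1
  · rw [div_lt_iff₀ (by norm_num)]; exact h2

/-- cocycle on the universal cover -/
noncomputable def cc (P Q : ℝ × ℂ) : GG :=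
  c0 (tr (-(nn P * (3/2))) P) (tr (-(nn P * (3/2))) Q) * gL ^ (nn Q - nn P)

lemma cc_tr (k : ℤ) (P Q : ℝ × ℂ) : cc (tr (k * (3/2)) P) (tr (k * (3/2)) Q) = cc P Q := by
  unfold cc
  rw [nn_tr, nn_tr, tr_tr, tr_tr]
  push_cast
  have e1 : (k : ℝ) * (3/2) + -((nn P + k) * (3/2)) = -(nn P * (3/2)) := by ring
  have e2 : nn Q + k - (nn P + k) = nn Q - nn P := by ring
  rw [e1, e2]

lemma cc_zero {P Q : ℝ × ℂ} (h : nn P = 0) : cc P Q = c0 P Q * gL ^ nn Q := by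
  unfold cc; rw [h]; simp [tr]

lemma seam_tab1 : ∀ y a : Bool, Tt y false a = gL * Tt y a false * gL⁻¹ := by decide

lemma c0_seam {P Q : ℝ × ℂ} (h1 : |P.1| < 1/2) (h2 : |Q.1| < 1/2) :
    c0 (tr (3/2) P) (tr (3/2) Q) = gL * c0 P Q * gL⁻¹ := by
  have key : ∀ P Q : ℝ × ℂ, |Q.1| < 1/2 → tt (tr (3/2) P) (tr (3/2) Q) = gL * tt P Q * gL⁻¹ := by
    intro P Q h
    rw [abs_lt] at h
    unfold tt
    rw [ee_tr, ee_tr, ss_tr, ss_tr]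
    have a1 : ng (ee (0 - 3/2) Q) = false := by
      apply ng_false; simp only [ee]; nlinarith [sq_nonneg Q.2.re]
    have a2 : ng (ee (3/2) Q) = false := by
      apply ng_false; simp only [ee]; nlinarith [sq_nonneg Q.2.re]
    rw [a1, a2, sub_self]
    simp only [Bool.false_and]
    exact seam_tab1 _ _
  unfold c0
  rw [key P P h1, key P Q h2]
  group

lemma cc_seam {P Q : ℝ × ℂ} (h1 : |P.1| < 1/2) (h2 : |Q.1| < 1/2) :
    cc P Q = gL ^ (-nn P) * c0 P Q * gL ^ nn Q := by
  have h1' := abs_lt.1 h1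
  rcases lt_or_ge P.1 0 with h | h
  · have hn : nn P = -1 := nn_eq (by push_cast; linarith) (by push_cast; linarith)
    unfold cc
    rw [hn]
    push_cast
    have := c0_seam h1 h2
    have e : -(-1 * (3/2) : ℝ) = 3/2 := by norm_num
    rw [e, this]
    group
  · have hn : nn P = 0 := nn_eq (by push_cast; linarith) (by push_cast; linarith)
    rw [cc_zero hn, hn]
    simp

lemma cc_as0 (P0 : ℝ × ℂ) (hx0 : 0 ≤ P0.1) (hx1 : P0.1 < 3/2)
    (h0 : ¬ (ee 0 P0 = 0 ∧ ss 0 P0 = 0)) (h1 : ¬ (ee (3/2) P0 = 0 ∧ ss (3/2) P0 = 0)) :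
    ∃ U ∈ 𝓝 P0, ∀ P ∈ U, ∀ Q ∈ U, ∀ R ∈ U, cc P Q * cc Q R = cc P R := by
  obtain ⟨U, hU, h⟩ := c0_as P0 hx0 hx1 h0 h1
  rcases hx0.lt_or_eq with hx | hx
  · have hV : ∀ᶠ P : ℝ × ℂ in 𝓝 P0, 0 < P.1 ∧ P.1 < 3/2 :=
      (continuous_fst.continuousAt.eventually_const_lt hx).and
        (continuous_fst.continuousAt.eventually_lt_const hx1)
    refine ⟨_, inter_mem hU hV, ?_⟩
    have hn : ∀ P : ℝ × ℂ, 0 < P.1 ∧ P.1 < 3/2 → nn P = 0 := fun P hP =>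
      nn_eq (by push_cast; linarith [hP.1]) (by push_cast; linarith [hP.2])
    rintro P ⟨hP, hP'⟩ Q ⟨hQ, hQ'⟩ R ⟨hR, hR'⟩
    rw [cc_zero (hn P hP'), cc_zero (hn Q hQ'), cc_zero (hn P hP'), hn Q hQ', hn R hR',
      ← h P hP Q hQ R hR]
    simp
  · have hV : ∀ᶠ P : ℝ × ℂ in 𝓝 P0, |P.1| < 1/2 :=
      (continuous_abs.comp continuous_fst).continuousAt.eventually_lt_const (by
        simp only [Function.comp, ← hx]; norm_num)
    refine ⟨_, inter_mem hU hV, ?_⟩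
    rintro P ⟨hP, hP'⟩ Q ⟨hQ, hQ'⟩ R ⟨hR, hR'⟩
    rw [cc_seam hP' hQ', cc_seam hQ' hR', cc_seam hP' hR', ← h P hP Q hQ R hR]
    group

/-- the core -/
def core : Set TT := {p | p.2 = 0}
def JJ : Set TT := hh '' core

lemma mem_JJ {P : ℝ × ℂ} {k : ℤ} (he : ee (k * (3/2)) P = 0) (hs : ss (k * (3/2)) P = 0) :
    cov P ∈ JJ := by
  simp only [ee, ss] at he hs
  set z : ℂ := ⟨P.1 - k * (3/2), P.2.re⟩ with hz'
  have hn : ‖z‖ = 1 := by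
    rw [← sq_eq_sq₀ (norm_nonneg _) zero_le_one, ← Complex.normSq_eq_norm_sq, Complex.normSq_apply]
    simp only [hz']; linarith
  have h0 : sqh 0 = 0 := by rw [sqh_apply]; simp
  have hpi := Real.pi_pos
  have hq : hz (((LL / (2 * Real.pi) * z.arg : ℝ) : AddCircle LL), 0) = z := by
    rw [hz_mk, h0]
    have : (⟨(0:ℂ).re, 2 * Real.pi / LL * (LL / (2 * Real.pi) * z.arg)⟩ : ℂ) = z.arg * Complex.I := by
      apply Complex.ext
      · simp
      · simp only [Complex.mul_im, Complex.ofReal_re, Complex.I_im, Complex.ofReal_im,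
          Complex.I_re, mul_one, mul_zero, add_zero]
        field_simp
    rw [this]
    have h2 := Complex.norm_mul_exp_arg_mul_I z
    rw [hn] at h2
    simpa using h2
  refine ⟨(((LL / (2 * Real.pi) * z.arg : ℝ) : AddCircle LL), 0), rfl, ?_⟩
  unfold hh
  rw [hq, h0]
  refine Prod.ext ?_ (Complex.ext ?_ ?_)
  · simp only [cov, hz']
    have : (((k : ℝ) * (3/2) : ℝ) : AddCircle LL) = 0 := by
      rw [AddCircle.coe_eq_zero_iff]; exact ⟨k, by simp [LL]⟩
    rw [AddCircle.coe_sub, this, sub_zero]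
  · simp [cov, hz']
  · simp only [cov, hz', Complex.zero_im]; linarith

lemma cov_tr (k : ℤ) (P : ℝ × ℂ) : cov (tr (k * (3/2)) P) = cov P := by
  simp only [cov, tr]
  have : (((k : ℝ) * (3/2) : ℝ) : AddCircle LL) = 0 := by
    rw [AddCircle.coe_eq_zero_iff]; exact ⟨k, by simp [LL]⟩
  rw [AddCircle.coe_add, this, add_zero]

lemma tr_cont (a : ℝ) : Continuous (tr a) := by unfold tr; fun_prop

lemma cc_as (P0 : ℝ × ℂ) (h0 : cov P0 ∉ JJ) :
    ∃ U ∈ 𝓝 P0, ∀ P ∈ U, ∀ Q ∈ U, ∀ R ∈ U, cc P Q * cc Q R = cc P R := by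
  set k := nn P0 with hk
  have hk1 := hk.symm
  rw [nn, Int.floor_eq_iff, le_div_iff₀ (by norm_num), div_lt_iff₀ (by norm_num)] at hk1
  obtain ⟨U, hU, h⟩ := cc_as0 (tr ((-k : ℤ) * (3/2)) P0) (by simp only [tr]; push_cast; linarith)
    (by simp only [tr]; push_cast; linarith)
    (fun hh => h0 (by
      rw [← cov_tr (-k) P0]
      exact mem_JJ (k := 0) (by simpa using hh.1) (by simpa using hh.2)))
    (fun hh => h0 (by
      rw [← cov_tr (-k) P0]
      exact mem_JJ (k := 1) (by simpa using hh.1) (by simpa using hh.2)))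
  refine ⟨_, (tr_cont _).continuousAt.preimage_mem_nhds hU, ?_⟩
  intro P hP Q hQ R hR
  have := h _ hP _ hQ _ hR
  rwa [cc_tr, cc_tr, cc_tr] at this

open Classical in
/-- the cocycle on the solid torus -/
noncomputable def cT (p q : TT) : GG :=
  if h : ∃ PQ : (ℝ × ℂ) × (ℝ × ℂ), cov PQ.1 = p ∧ cov PQ.2 = q ∧ |PQ.1.1 - PQ.2.1| < 3/4
  then cc h.choose.1 h.choose.2 else 1

lemma cov_eq {P Q : ℝ × ℂ} (h : cov P = cov Q) : ∃ k : ℤ, Q = tr (k * (3/2)) P := by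
  have h1 : (P.1 : AddCircle LL) = Q.1 := congrArg Prod.fst h
  have h2 : P.2 = Q.2 := congrArg (fun q : TT => q.2) h
  obtain ⟨k, hk⟩ : ∃ k : ℤ, k • LL = Q.1 - P.1 := by
    rw [← AddCircle.coe_eq_zero_iff, AddCircle.coe_sub, h1, sub_self]
  rw [zsmul_eq_mul] at hk; simp only [LL] at hk
  exact ⟨k, Prod.ext (by simp only [tr]; linarith) h2.symm⟩

lemma cT_cov {P Q : ℝ × ℂ} (h : |P.1 - Q.1| < 3/4) : cT (cov P) (cov Q) = cc P Q := by
  have hex : ∃ PQ : (ℝ × ℂ) × (ℝ × ℂ), cov PQ.1 = cov P ∧ cov PQ.2 = cov Q ∧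
      |PQ.1.1 - PQ.2.1| < 3/4 := ⟨(P, Q), rfl, rfl, h⟩
  rw [cT, dif_pos hex]
  obtain ⟨h1, h2, h3⟩ := hex.choose_spec
  obtain ⟨k, hk⟩ := cov_eq h1.symm
  obtain ⟨l, hl⟩ := cov_eq h2.symm
  rw [hk, hl] at h3 ⊢
  simp only [tr] at h3
  rw [abs_lt] at h h3
  have hkl : k = l := by
    have a1 : (k : ℝ) < l + 1 := by linarith
    have a2 : (l : ℝ) < k + 1 := by linarith
    have a1 : k < l + 1 := by exact_mod_cast a1
    have a2 : l < k + 1 := by exact_mod_cast a2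
    omega
  rw [hkl, cc_tr]

/-- closeness in the first coordinate -/
lemma cov_close (P0 : ℝ × ℂ) : {P : ℝ × ℂ | |P.1 - P0.1| < 3/8} ∈ 𝓝 P0 := by
  have : Continuous fun P : ℝ × ℂ => |P.1 - P0.1| := by fun_prop
  exact this.continuousAt.eventually_lt_const (by simp)

lemma close2 {P P0 Q : ℝ × ℂ} (h1 : |P.1 - P0.1| < 3/8) (h2 : |Q.1 - P0.1| < 3/8) :
    |P.1 - Q.1| < 3/4 := by
  rw [abs_lt] at *; constructor <;> linarith

lemma cT_as : ASOn JJᶜ cT := by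
  intro p hp
  obtain ⟨P0, rfl⟩ := cov_surj p
  obtain ⟨U, hU, h⟩ := cc_as P0 hp
  refine ⟨cov '' (U ∩ {P : ℝ × ℂ | |P.1 - P0.1| < 3/8}),
    mem_nhdsWithin_of_mem_nhds (cov_open.image_mem_nhds (inter_mem hU (cov_close P0))), ?_⟩
  rintro _ ⟨P, ⟨hP, hP'⟩, rfl⟩ _ ⟨Q, ⟨hQ, hQ'⟩, rfl⟩ _ ⟨R, ⟨hR, hR'⟩, rfl⟩
  rw [cT_cov (close2 hP' hQ'), cT_cov (close2 hQ' hR'), cT_cov (close2 hP' hR')]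
  exact h P hP Q hQ R hR

lemma cT_path {S : Set ℝ} {γ : ℝ → ℝ × ℂ} (hγ : Continuous γ) {σ : ℝ → GG}
    (h : LocPot S (fun s t => cc (γ s) (γ t)) σ) :
    LocPot S (fun s t => cT (cov (γ s)) (cov (γ t))) σ := by
  intro t ht
  obtain ⟨U, hU, h⟩ := h t ht
  refine ⟨_, inter_mem hU (mem_nhdsWithin_of_mem_nhds
    (hγ.continuousAt.preimage_mem_nhds (cov_close (γ t)))), ?_⟩
  rintro p ⟨hp, hp'⟩ q ⟨hq, hq'⟩
  simp only
  rw [cT_cov (close2 hp' hq')]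
  exact h p hp q hq

end PartNo6

section PartNo7

open Set Filter Topology

lemma tt_eq {P Q Q' : ℝ × ℂ} (h0 : ng (ee 0 Q) = ng (ee 0 Q'))
    (h1 : ng (ee (3/2) Q) = ng (ee (3/2) Q')) : tt P Q = tt P Q' := by
  unfold tt; rw [h0, h1]

lemma c0_one {P Q : ℝ × ℂ} (h0 : ng (ee 0 Q) = ng (ee 0 P))
    (h1 : ng (ee (3/2) Q) = ng (ee (3/2) P)) : c0 P Q = 1 := by
  unfold c0; rw [tt_eq h0 h1]; group

lemma locPot_of_ev {S : Set ℝ} {c : ℝ → ℝ → GG} {σ : ℝ → GG}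
    (h : ∀ x ∈ S, ∃ A : ℝ → Prop, (∀ᶠ s in 𝓝[S] x, A s) ∧
      ∀ s t, s ∈ S → t ∈ S → A s → A t → c s t = (σ s)⁻¹ * σ t) : LocPot S c σ := by
  intro x hx
  obtain ⟨A, hA, h⟩ := h x hx
  refine ⟨_, inter_mem hA self_mem_nhdsWithin, ?_⟩
  rintro p ⟨hp, hp'⟩ q ⟨hq, hq'⟩
  exact h p q hp' hq' hp hq

lemma evw {S : Set ℝ} {x : ℝ} {A : ℝ → Prop} (h : ∀ᶠ s in 𝓝 x, A s) : ∀ᶠ s in 𝓝[S] x, A s :=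
  mem_nhdsWithin_of_mem_nhds h

lemma ev_lt {f : ℝ → ℝ} (hf : Continuous f) {x a : ℝ} (h : f x < a) : ∀ᶠ s in 𝓝 x, f s < a :=
  hf.continuousAt.eventually_lt_const h
lemma ev_gt {f : ℝ → ℝ} (hf : Continuous f) {x a : ℝ} (h : a < f x) : ∀ᶠ s in 𝓝 x, a < f s :=
  hf.continuousAt.eventually_const_lt h

lemma sin_neg' {x : ℝ} (h1 : Real.pi < x) (h2 : x < 2 * Real.pi) : Real.sin x < 0 := by
  have := Real.sin_pos_of_pos_of_lt_pi (x := x - Real.pi) (by linarith) (by linarith)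
  rw [Real.sin_sub_pi] at this
  linarith

/-- outer longitude -/
lemma lonO (S : Set ℝ) : LocPot S (fun s t : ℝ => cT (cov (s, 3)) (cov (t, 3)))
    (fun t => gL ^ ⌊t / (3/2)⌋) := by
  refine cT_path (γ := fun t => (t, 3)) (by fun_prop) ?_
  have key : ∀ s t : ℝ, cc (s, 3) (t, 3) = (gL ^ ⌊s / (3/2)⌋)⁻¹ * gL ^ ⌊t / (3/2)⌋ := by
    intro s t
    have hf : ∀ d x : ℝ, ng (ee d (x, 3)) = false := by
      intro d x; apply ng_false; simp only [ee, Complex.re_ofNat]; nlinarith [sq_nonneg (x - d)]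
    unfold cc
    rw [c0_one]
    · simp only [nn]; group
    · simp only [tr, hf]
    · simp only [tr, hf]
  intro x _
  exact ⟨univ, univ_mem, fun p _ q _ => key p q⟩

/-- potential on the outer meridian -/
noncomputable def sMO (φ : ℝ) : GG :=
  if φ ≤ Real.pi then 1 else
    if Real.cos φ < 0 then pw gB0 (ng (ee 0 (0, ⟨3 * Real.cos φ, 3 * Real.sin φ⟩)))
    else gM * pw gA0 (ng (ee 0 (0, ⟨3 * Real.cos φ, 3 * Real.sin φ⟩)))

lemma mk_cont {f g : ℝ → ℝ} (hf : Continuous f) (hg : Continuous g) :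
    Continuous fun t => (⟨f t, g t⟩ : ℂ) :=
  Complex.equivRealProdCLM.symm.continuous.comp (hf.prodMk hg)

lemma MO_tab : ∀ a b : Bool, (Tt false a false)⁻¹ * Tt false b false = (pw gB0 a)⁻¹ * pw gB0 b := by
  decide
lemma MO_tab' : ∀ a b : Bool, (Tt true a false)⁻¹ * Tt true b false =
    (gM * pw gA0 a)⁻¹ * (gM * pw gA0 b) := by
  decide

lemma merO : LocPot (Icc 0 (2 * Real.pi)) (fun s t : ℝ =>
    cT (cov (0, ⟨3 * Real.cos s, 3 * Real.sin s⟩)) (cov (0, ⟨3 * Real.cos t, 3 * Real.sin t⟩)))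
    sMO := by
  have hpi := Real.pi_pos
  refine cT_path (γ := fun s => (0, ⟨3 * Real.cos s, 3 * Real.sin s⟩))
    (continuous_const.prodMk (mk_cont (by fun_prop) (by fun_prop))) ?_
  set γ : ℝ → ℝ × ℂ := fun s => (0, ⟨3 * Real.cos s, 3 * Real.sin s⟩) with hγ
  have hγc : Continuous γ := continuous_const.prodMk (mk_cont (by fun_prop) (by fun_prop))
  have hn : ∀ s, nn (γ s) = 0 := fun s => nn_eq (by simp [hγ]) (by simp [hγ])
  have h1 : ∀ s, ng (ee (3/2) (γ s)) = false := by
    intro s; apply ng_false; simp only [ee, hγ]; nlinarith [sq_nonneg (3 * Real.cos s)]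
  have hs0 : ∀ s, ss 0 (γ s) = 3 * Real.sin s := by intro s; simp [ss, hγ]
  have he0 : ∀ s, ee 0 (γ s) = 9 * Real.cos s ^ 2 - 1 := by intro s; simp only [ee, hγ]; ring
  have hcc : ∀ s t, cc (γ s) (γ t) = c0 (γ s) (γ t) := by
    intro s t; rw [cc_zero (hn s), hn t]; simp
  have htt : ∀ s t, tt (γ s) (γ t) =
      Tt (ng (-(3 * Real.cos s))) (ng (ee 0 (γ t)) && ng (3 * Real.sin s)) false := by
    intro s t; unfold tt; rw [h1, hs0]; simp [hγ]
  have hσ : ∀ s, sMO s = if s ≤ Real.pi then 1 else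
    if Real.cos s < 0 then pw gB0 (ng (ee 0 (γ s))) else gM * pw gA0 (ng (ee 0 (γ s))) := fun s => rfl
  refine locPot_of_ev fun x hx => ?_
  rcases lt_trichotomy x Real.pi with h | h | h
  · refine ⟨fun s => s < Real.pi, evw (ev_lt continuous_id h), ?_⟩
    intro s t hs ht As At
    have : ng (3 * Real.sin s) = false := by
      apply ng_false
      have := Real.sin_nonneg_of_nonneg_of_le_pi hs.1 As.le
      linarith
    rw [hσ, hσ, if_pos As.le, if_pos At.le, hcc, c0, htt, htt, this]
    simp
  · refine ⟨fun s => 3 * Real.cos s < -1, evw (ev_lt (by fun_prop) (by rw [h]; norm_num)), ?_⟩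
    have H : ∀ s, 3 * Real.cos s < -1 → ng (ee 0 (γ s)) = false ∧ sMO s = 1 := by
      intro s hs
      have e : ng (ee 0 (γ s)) = false := by
        apply ng_false; rw [he0]; nlinarith
      refine ⟨e, ?_⟩
      rw [hσ, e, if_pos (by linarith : Real.cos s < 0)]
      simp [pw]
    intro s t hs ht As At
    rw [hcc, c0_one (by rw [(H s As).1, (H t At).1]) (by rw [h1, h1]), (H s As).2, (H t At).2]
    simp
  · rcases hx.2.lt_or_eq with h2 | h2
    · have B : ∀ᶠ s in 𝓝 x, Real.pi < s ∧ s < 2 * Real.pi :=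
        (ev_gt continuous_id h).and (ev_lt continuous_id h2)
      have HB : ∀ s, Real.pi < s ∧ s < 2 * Real.pi → ng (3 * Real.sin s) = true := fun s hs =>
        ng_true (by have := sin_neg' hs.1 hs.2; linarith)
      rcases lt_trichotomy (Real.cos x) 0 with hy | hy | hy
      · refine ⟨_, evw (B.and (ev_lt Real.continuous_cos hy)), ?_⟩
        rintro s t hs ht ⟨As, Cs⟩ ⟨At, Ct⟩
        rw [hσ, hσ, if_neg As.1.not_ge, if_neg At.1.not_ge, if_pos Cs, if_pos Ct, hcc, c0, htt,
          htt, HB s As, ng_false (by linarith)]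
        simp only [Bool.and_true]
        exact MO_tab _ _
      · refine ⟨_, evw (B.and (ev_lt (f := fun s => 9 * Real.cos s ^ 2) (a := 1)
          (by fun_prop) (by simp [hy]))), ?_⟩
        have H : ∀ s, ((Real.pi < s ∧ s < 2 * Real.pi) ∧ 9 * Real.cos s ^ 2 < 1) →
            ng (ee 0 (γ s)) = true ∧ sMO s = gB0 := by
          rintro s ⟨hs, hs'⟩
          have e : ng (ee 0 (γ s)) = true := by
            apply ng_true; rw [he0]; linarith
          refine ⟨e, ?_⟩
          rw [hσ, e, if_neg hs.1.not_ge]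
          split_ifs
          · rfl
          · decide
        intro s t hs ht As At
        rw [hcc, c0_one (by rw [(H s As).1, (H t At).1]) (by rw [h1, h1]), (H s As).2, (H t At).2]
        simp
      · refine ⟨_, evw (B.and (ev_gt Real.continuous_cos hy)), ?_⟩
        rintro s t hs ht ⟨As, Cs⟩ ⟨At, Ct⟩
        rw [hσ, hσ, if_neg As.1.not_ge, if_neg At.1.not_ge, if_neg Cs.not_gt, if_neg Ct.not_gt,
          hcc, c0, htt, htt, HB s As, ng_true (by linarith)]
        simp only [Bool.and_true]
        exact MO_tab' _ _
    · refine ⟨_, evw ((ev_gt continuous_id h).and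
        (ev_gt (f := fun s => 3 * Real.cos s) (a := 1) (by fun_prop) (by simp [h2]))), ?_⟩
      have H : ∀ s, (Real.pi < s ∧ 1 < 3 * Real.cos s) →
          ng (ee 0 (γ s)) = false ∧ sMO s = gM := by
        rintro s ⟨hs, hs'⟩
        have e : ng (ee 0 (γ s)) = false := by
          apply ng_false; rw [he0]; nlinarith
        refine ⟨e, ?_⟩
        rw [hσ, e, if_neg hs.not_ge, if_neg (by linarith)]
        simp [pw]
      intro s t hs ht As At
      rw [hcc, c0_one (by rw [(H s As).1, (H t At).1]) (by rw [h1, h1]), (H s As).2, (H t At).2]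
      simp

lemma sMO_zero : sMO 0 = 1 := by simp [sMO, Real.pi_pos.le]
lemma sMO_end : sMO (2 * Real.pi) = gM := by
  have := Real.pi_pos
  have e : ng (ee 0 (0, ⟨3 * Real.cos (2 * Real.pi), 3 * Real.sin (2 * Real.pi)⟩)) = false := by
    apply ng_false; simp [ee]
  rw [sMO, e, if_neg (by linarith), if_neg (by simp)]
  simp [pw]

/-- the lift of the inner embedding -/
noncomputable def PI (p : TT) : ℝ × ℂ :=
  ((hz p).re, ⟨(hz p).im, (hz p).re * (hz p).im + (sqh p.2).im⟩)

lemma cov_PI (p : TT) : cov (PI p) = hh p := rfl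

/-- potential on the inner meridian -/
noncomputable def sMI (x : ℝ → ℝ) (s : ℝ) : GG :=
  if s ≤ Real.pi then 1 else gA0⁻¹ * pw gA0 (ng (x s ^ 2 - 1))

lemma MI_tab : ∀ a b : Bool, (Tt false a true)⁻¹ * Tt false b true =
    (gA0⁻¹ * pw gA0 a)⁻¹ * (gA0⁻¹ * pw gA0 b) := by
  decide

lemma merI {x v : ℝ → ℝ} (hx : Continuous x) (hv : Continuous v)
    (hb : ∀ s, 98/100 < x s ∧ x s < 102/100) (hv1 : ∀ s, 0 ≤ s → s ≤ Real.pi → 0 ≤ v s)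
    (hv2 : ∀ s, Real.pi < s → s < 2 * Real.pi → v s < 0) (hpi' : x Real.pi < 1)
    (h2pi : 1 < x (2 * Real.pi)) : LocPot (Icc 0 (2 * Real.pi)) (fun s t : ℝ =>
    cT (cov (x s, ⟨0, v s⟩)) (cov (x t, ⟨0, v t⟩))) (sMI x) := by
  have hpi := Real.pi_pos
  refine cT_path (γ := fun s => (x s, ⟨0, v s⟩))
    (hx.prodMk (mk_cont (by fun_prop) hv)) ?_
  set γ : ℝ → ℝ × ℂ := fun s => (x s, ⟨0, v s⟩) with hγ
  have hn : ∀ s, nn (γ s) = 0 := fun s => nn_eq (by have := hb s; simp [hγ]; linarith)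
    (by have := hb s; simp [hγ]; linarith)
  have h1 : ∀ s, ng (ee (3/2) (γ s)) = true := by
    intro s; apply ng_true; have := hb s; simp only [ee, hγ]; nlinarith
  have hs : ∀ d s, ss d (γ s) = v s := by intro d s; simp [ss, hγ]
  have he0 : ∀ s, ee 0 (γ s) = x s ^ 2 - 1 := by intro s; simp only [ee, hγ]; ring
  have hcc : ∀ s t, cc (γ s) (γ t) = c0 (γ s) (γ t) := by
    intro s t; rw [cc_zero (hn s), hn t]; simp
  have htt : ∀ s t, tt (γ s) (γ t) = Tt false (ng (x t ^ 2 - 1) && ng (v s)) (ng (v s)) := by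
    intro s t; unfold tt; rw [h1, hs, hs, he0, Bool.true_and]; simp [hγ, ng]
  refine locPot_of_ev fun a ha => ?_
  rcases lt_trichotomy a Real.pi with h | h | h
  · refine ⟨fun s => s < Real.pi, evw (ev_lt continuous_id h), ?_⟩
    intro s t hs ht As At
    rw [sMI, sMI, if_pos As.le, if_pos At.le, hcc, c0, htt, htt, ng_false (hv1 s hs.1 As.le)]
    simp
  · refine ⟨fun s => x s < 1, evw (ev_lt hx (by rwa [h])), ?_⟩
    have H : ∀ s, x s < 1 → ng (x s ^ 2 - 1) = true ∧ sMI x s = 1 := by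
      intro s hs
      have e : ng (x s ^ 2 - 1) = true := by
        apply ng_true; have := hb s; nlinarith
      refine ⟨e, ?_⟩
      rw [sMI, e]
      simp [pw]
    intro s t hs ht As At
    rw [hcc, c0_one (by rw [he0, he0, (H s As).1, (H t At).1]) (by rw [h1, h1]), (H s As).2,
      (H t At).2]
    simp
  · rcases ha.2.lt_or_eq with h2 | h2
    · refine ⟨_, evw ((ev_gt continuous_id h).and (ev_lt continuous_id h2)), ?_⟩
      rintro s t hs ht ⟨As, Cs⟩ ⟨At, Ct⟩
      simp only [id] at *
      rw [sMI, sMI, if_neg As.not_ge, if_neg At.not_ge, hcc, c0, htt, htt, ng_true (hv2 s As Cs)]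
      simp only [Bool.and_true]
      exact MI_tab _ _
    · refine ⟨_, evw ((ev_gt continuous_id h).and (ev_gt hx (by rwa [h2]))), ?_⟩
      have H : ∀ s, (Real.pi < s ∧ 1 < x s) → ng (x s ^ 2 - 1) = false ∧ sMI x s = gA0⁻¹ := by
        rintro s ⟨hs, hs'⟩
        have e : ng (x s ^ 2 - 1) = false := by
          apply ng_false; nlinarith
        refine ⟨e, ?_⟩
        rw [sMI, e, if_neg hs.not_ge]
        simp [pw]
      intro s t hs ht As At
      rw [hcc, c0_one (by rw [he0, he0, (H s As).1, (H t At).1]) (by rw [h1, h1]), (H s As).2,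
        (H t At).2]
      simp

lemma sMI_zero (x : ℝ → ℝ) : sMI x 0 = 1 := by simp [sMI, Real.pi_pos.le]
lemma sMI_end {x : ℝ → ℝ} (h : 1 < x (2 * Real.pi)) : sMI x (2 * Real.pi) = gA0⁻¹ := by
  have := Real.pi_pos
  have e : ng (x (2 * Real.pi) ^ 2 - 1) = false := by
    apply ng_false; nlinarith
  rw [sMI, e, if_neg (by linarith)]
  simp [pw]

/-- the lifted inner longitude -/
noncomputable def gLI (a s : ℝ) : ℝ × ℂ :=
  (a * Real.cos s, ⟨a * Real.sin s, a * Real.cos s * (a * Real.sin s)⟩)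

noncomputable def sLI (a : ℝ) (s : ℝ) : GG :=
  if s ≤ Real.pi then
    (if a * Real.cos s < 0 then gL⁻¹ * pw gA0 (ng (ee (-(3/2)) (gLI a s))) else 1)
  else (if a * Real.cos s < 0 then gL⁻¹ * gA0 else gL⁻¹ * gA0 * gL * pw gB1 (ng (ee (3/2) (gLI a s))))

lemma LI_tab1 : ∀ a b : Bool, (Tt true a false)⁻¹ * Tt true b false =
    (gL⁻¹ * pw gA0 a)⁻¹ * (gL⁻¹ * pw gA0 b) := by decide
lemma LI_tab2 : ∀ a b : Bool, (Tt false false a)⁻¹ * Tt false false b =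
    (gL⁻¹ * gA0 * gL * pw gB1 a)⁻¹ * (gL⁻¹ * gA0 * gL * pw gB1 b) := by decide

lemma lonI {a : ℝ} (ha : 1 < a) (ha' : a < 102/100) : LocPot (Icc 0 (2 * Real.pi))
    (fun s t : ℝ => cT (cov (gLI a s)) (cov (gLI a t))) (sLI a) := by
  have hpi := Real.pi_pos
  have hγc : Continuous (gLI a) :=
    Continuous.prodMk (by fun_prop) (mk_cont (by fun_prop) (by fun_prop))
  refine cT_path hγc ?_
  have hcs : ∀ s, (a * Real.cos s) ^ 2 + (a * Real.sin s) ^ 2 = a ^ 2 := by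
    intro s
    have := Real.sin_sq_add_cos_sq s
    have : (a * Real.cos s) ^ 2 + (a * Real.sin s) ^ 2 =
      a ^ 2 * (Real.sin s ^ 2 + Real.cos s ^ 2) := by ring
    rw [this, Real.sin_sq_add_cos_sq, mul_one]
  have ha2 : 1 < a ^ 2 := by nlinarith
  have ha2' : a ^ 2 < 105/100 := by nlinarith
  have hX : ∀ s, -(3/2) < a * Real.cos s ∧ a * Real.cos s < 3/2 := by
    intro s
    have h1 := Real.cos_le_one s
    have h2 := Real.neg_one_le_cos s
    constructor <;> nlinarith
  have he : ∀ d s, ee d (gLI a s) = a ^ 2 - 2 * d * (a * Real.cos s) + d ^ 2 - 1 := by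
    intro d s; simp only [ee, gLI]; rw [← hcs s]; ring
  have hs : ∀ d s, ss d (gLI a s) = d * (a * Real.sin s) := by
    intro d s; simp only [ss, gLI]; ring
  have he0 : ∀ s, ng (ee 0 (gLI a s)) = false := by
    intro s; apply ng_false; rw [he]; linarith
  have hn0 : ∀ s, ¬ a * Real.cos s < 0 → nn (gLI a s) = 0 := fun s h =>
    nn_eq (by simp only [gLI]; push_cast; linarith)
      (by simp only [gLI]; push_cast; linarith [(hX s).2])
  have hn1 : ∀ s, a * Real.cos s < 0 → nn (gLI a s) = -1 := fun s h =>
    nn_eq (by simp only [gLI]; push_cast; linarith [(hX s).1]) (by simp only [gLI]; push_cast; linarith)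
  have htt0 : ∀ s t, tt (gLI a s) (gLI a t) = Tt (ng (-(a * Real.sin s))) false
      (ng (ee (3/2) (gLI a t)) && ng (3/2 * (a * Real.sin s))) := by
    intro s t; unfold tt; rw [he0, hs, hs, Bool.false_and]; rfl
  have htt1 : ∀ s t, tt (tr (3/2) (gLI a s)) (tr (3/2) (gLI a t)) = Tt (ng (-(a * Real.sin s)))
      (ng (ee (-(3/2)) (gLI a t)) && ng (-(3/2) * (a * Real.sin s))) false := by
    intro s t; unfold tt; rw [ee_tr, ee_tr, ss_tr, ss_tr, sub_self, he0, hs, hs, Bool.false_and,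
      zero_sub]; rfl
  have hcc0 : ∀ s t, ¬ a * Real.cos s < 0 → cc (gLI a s) (gLI a t) =
      (tt (gLI a s) (gLI a s))⁻¹ * tt (gLI a s) (gLI a t) * gL ^ nn (gLI a t) := by
    intro s t h; rw [cc_zero (hn0 s h)]; rfl
  have hcc1 : ∀ s t, a * Real.cos s < 0 → cc (gLI a s) (gLI a t) =
      (tt (tr (3/2) (gLI a s)) (tr (3/2) (gLI a s)))⁻¹ * tt (tr (3/2) (gLI a s)) (tr (3/2) (gLI a t))
        * gL ^ (nn (gLI a t) + 1) := by
    intro s t h; unfold cc; rw [hn1 s h]; push_cast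
    have e : -(-1 * (3/2) : ℝ) = 3/2 := by norm_num
    rw [e, sub_neg_eq_add]; rfl
  have hxc : Continuous fun s => a * Real.cos s := by fun_prop
  refine locPot_of_ev fun x hx => ?_
  -- helper: near the vertical plane
  have posX : ∀ s, 9/10 < a * Real.cos s → ng (ee (3/2) (gLI a s)) = true := by
    intro s h; apply ng_true; rw [he]; linarith
  have negX : ∀ s, a * Real.cos s < -(9/10) → ng (ee (-(3/2)) (gLI a s)) = true := by
    intro s h; apply ng_true; rw [he]; linarith
  have midX : ∀ s, |a * Real.cos s| < 1/10 → ng (ee (-(3/2)) (gLI a s)) = false ∧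
      ng (ee (3/2) (gLI a s)) = false := by
    intro s h; rw [abs_lt] at h
    constructor <;> (apply ng_false; rw [he]; linarith)
  rcases lt_trichotomy x Real.pi with h | h | h
  · rcases hx.1.lt_or_eq with h0 | h0
    · have B : ∀ᶠ s in 𝓝 x, 0 < s ∧ s < Real.pi :=
        (ev_gt continuous_id h0).and (ev_lt continuous_id h)
      have HB : ∀ s, 0 < s ∧ s < Real.pi → 0 < a * Real.sin s := fun s hs =>
        mul_pos (by linarith) (Real.sin_pos_of_pos_of_lt_pi hs.1 hs.2)
      rcases lt_trichotomy (a * Real.cos x) 0 with hy | hy | hy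
      · refine ⟨_, evw (B.and (ev_lt hxc hy)), ?_⟩
        rintro s t _ _ ⟨As, Cs⟩ ⟨At, Ct⟩
        have := HB s As
        rw [sLI, sLI, if_pos As.2.le, if_pos At.2.le, if_pos Cs, if_pos Ct, hcc1 s t Cs, htt1, htt1,
          hn1 t Ct, ng_true (by linarith : -(a * Real.sin s) < 0),
          ng_true (by linarith : -(3/2) * (a * Real.sin s) < 0)]
        simp only [Bool.and_true, neg_add_cancel, zpow_zero, mul_one]
        exact LI_tab1 _ _
      · refine ⟨_, evw (B.and (ev_lt (f := fun s => |a * Real.cos s|) (a := 1/10)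
          (by fun_prop) (by simp [hy]))), ?_⟩
        have H : ∀ s, (0 < s ∧ s < Real.pi) ∧ |a * Real.cos s| < 1/10 →
            sLI a s = gL ^ nn (gLI a s) := by
          rintro s ⟨hs, hs'⟩
          rw [sLI, if_pos hs.2.le]
          split_ifs with hc
          · rw [hn1 s hc, (midX s hs').1]; simp [pw]
          · rw [hn0 s hc]; simp
        intro s t _ _ As At
        rw [H s As, H t At]
        have := HB s As.1
        by_cases hc : a * Real.cos s < 0
        · rw [hcc1 s t hc, htt1, htt1, (midX s As.2).1, (midX t At.2).1, hn1 s hc]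
          group
        · rw [hcc0 s t hc, htt0, htt0, (midX s As.2).2, (midX t At.2).2, hn0 s hc]
          group
      · refine ⟨_, evw (B.and (ev_gt hxc hy)), ?_⟩
        rintro s t _ _ ⟨As, Cs⟩ ⟨At, Ct⟩
        have := HB s As
        rw [sLI, sLI, if_pos As.2.le, if_pos At.2.le, if_neg Cs.not_gt, if_neg Ct.not_gt,
          hcc0 s t Cs.not_gt, htt0, htt0, hn0 t Ct.not_gt,
          ng_false (by linarith : 0 ≤ (3/2) * (a * Real.sin s))]
        simp
    · refine ⟨_, evw ((ev_lt continuous_id h).and (ev_gt (a := 9/10) hxc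
        (by rw [← h0]; simp; linarith))), ?_⟩
      rintro s t _ _ ⟨As, Cs⟩ ⟨At, Ct⟩
      simp only [id] at As At
      have Cs' : ¬ a * Real.cos s < 0 := by linarith
      have Ct' : ¬ a * Real.cos t < 0 := by linarith
      rw [sLI, sLI, if_pos As.le, if_pos At.le, if_neg Cs', if_neg Ct', hcc0 s t Cs', htt0, htt0,
        hn0 t Ct', posX s Cs, posX t Ct]
      group
  · refine ⟨_, evw (ev_lt (a := -(9/10)) hxc (by rw [h]; simp; linarith)), ?_⟩
    have H : ∀ s, a * Real.cos s < -(9/10) → sLI a s = gL⁻¹ * gA0 := by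
      intro s hs
      have : a * Real.cos s < 0 := by linarith
      rw [sLI, negX s hs, if_pos this, if_pos this]
      split_ifs <;> rfl
    intro s t _ _ As At
    rw [H s As, H t At, hcc1 s t (by linarith), htt1, htt1, negX s As, negX t At,
      hn1 t (by linarith)]
    group
  · rcases hx.2.lt_or_eq with h0 | h0
    · have B : ∀ᶠ s in 𝓝 x, Real.pi < s ∧ s < 2 * Real.pi :=
        (ev_gt continuous_id h).and (ev_lt continuous_id h0)
      have HB : ∀ s, Real.pi < s ∧ s < 2 * Real.pi → a * Real.sin s < 0 := fun s hs =>
        mul_neg_of_pos_of_neg (by linarith) (sin_neg' hs.1 hs.2)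
      rcases lt_trichotomy (a * Real.cos x) 0 with hy | hy | hy
      · refine ⟨_, evw (B.and (ev_lt hxc hy)), ?_⟩
        rintro s t _ _ ⟨As, Cs⟩ ⟨At, Ct⟩
        have := HB s As
        rw [sLI, sLI, if_neg As.1.not_ge, if_neg At.1.not_ge, if_pos Cs, if_pos Ct, hcc1 s t Cs,
          htt1, htt1, hn1 t Ct, ng_false (by linarith : 0 ≤ -(3/2) * (a * Real.sin s))]
        simp
      · refine ⟨_, evw (B.and (ev_lt (f := fun s => |a * Real.cos s|) (a := 1/10)
          (by fun_prop) (by simp [hy]))), ?_⟩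
        have H : ∀ s, (Real.pi < s ∧ s < 2 * Real.pi) ∧ |a * Real.cos s| < 1/10 →
            sLI a s = gL⁻¹ * gA0 * gL * gL ^ nn (gLI a s) := by
          rintro s ⟨hs, hs'⟩
          rw [sLI, if_neg hs.1.not_ge]
          split_ifs with hc
          · rw [hn1 s hc]; group
          · rw [hn0 s hc, (midX s hs').2]; simp [pw]
        intro s t _ _ As At
        rw [H s As, H t At]
        have := HB s As.1
        by_cases hc : a * Real.cos s < 0
        · rw [hcc1 s t hc, htt1, htt1, (midX s As.2).1, (midX t At.2).1, hn1 s hc]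
          group
        · rw [hcc0 s t hc, htt0, htt0, (midX s As.2).2, (midX t At.2).2, hn0 s hc]
          group
      · refine ⟨_, evw (B.and (ev_gt hxc hy)), ?_⟩
        rintro s t _ _ ⟨As, Cs⟩ ⟨At, Ct⟩
        have := HB s As
        rw [sLI, sLI, if_neg As.1.not_ge, if_neg At.1.not_ge, if_neg Cs.not_gt, if_neg Ct.not_gt,
          hcc0 s t Cs.not_gt, htt0, htt0, hn0 t Ct.not_gt,
          ng_true (by linarith : (3/2) * (a * Real.sin s) < 0),
          ng_false (by linarith : 0 ≤ -(a * Real.sin s))]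
        simp only [Bool.and_true, zpow_zero, mul_one]
        exact LI_tab2 _ _
    · refine ⟨_, evw ((ev_gt continuous_id h).and (ev_gt (a := 9/10) hxc
        (by rw [h0]; simp; linarith))), ?_⟩
      rintro s t _ _ ⟨As, Cs⟩ ⟨At, Ct⟩
      simp only [id] at As At
      have Cs' : ¬ a * Real.cos s < 0 := by linarith
      have Ct' : ¬ a * Real.cos t < 0 := by linarith
      rw [sLI, sLI, if_neg As.not_ge, if_neg At.not_ge, if_neg Cs', if_neg Ct', hcc0 s t Cs', htt0,
        htt0, hn0 t Ct', posX s Cs, posX t Ct]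
      group

lemma sLI_zero {a : ℝ} (ha : 1 < a) : sLI a 0 = 1 := by
  have : ¬ a < 0 := by linarith
  simp [sLI, Real.pi_pos.le, this]
lemma sLI_end {a : ℝ} (ha : 1 < a) (ha' : a < 102/100) : sLI a (2 * Real.pi) = gLam := by
  have := Real.pi_pos
  have e : ng (ee (3/2) (gLI a (2 * Real.pi))) = true := by
    apply ng_true; simp only [ee, gLI, Real.cos_two_pi, Real.sin_two_pi]; nlinarith
  rw [sLI, e, if_neg (by linarith), if_neg (by simp; linarith)]
  rfl

end PartNo7

section PartNo8

open Set Filter Topology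

/-- squash of the line -/
noncomputable def rhos (r : ℝ) : ℝ := (1 / 10 : ℝ) • (OpenPartialHomeomorph.univUnitBall r : ℝ)

lemma rhos_open : IsOpenEmbedding rhos := by
  have h1 : IsOpenEmbedding (OpenPartialHomeomorph.univUnitBall : OpenPartialHomeomorph ℝ ℝ) :=
    OpenPartialHomeomorph.isOpenEmbedding _ rfl
  have h2 := (Homeomorph.smulOfNeZero (1/10 : ℝ) (by norm_num) : ℝ ≃ₜ ℝ).isOpenEmbedding
  exact h2.comp h1

lemma rhos_zero : rhos 0 = 0 := by simp [rhos]

lemma rhos_bd (r : ℝ) : -(1/10) < rhos r := by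
  have h1 : (OpenPartialHomeomorph.univUnitBall r : ℝ) ∈ Metric.ball (0:ℝ) 1 :=
    OpenPartialHomeomorph.univUnitBall.map_source (mem_univ r)
  rw [rhos, smul_eq_mul]
  have h2 : |(OpenPartialHomeomorph.univUnitBall r : ℝ)| < 1 := by simpa using h1
  rw [abs_lt] at h2
  linarith

/-- cover of the collar -/
noncomputable def Ph (P : ℝ × ℝ × ℝ) : TT := cov (P.1, 3 * Complex.exp ⟨rhos P.2.1, P.2.2⟩)

lemma Ph_cont : Continuous Ph := by
  refine cov_cont.comp (continuous_fst.prodMk (continuous_const.mul (Complex.continuous_exp.comp ?_)))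
  exact Complex.equivRealProdCLM.symm.continuous.comp
    (f := fun P : ℝ × ℝ × ℝ => (rhos P.2.1, P.2.2))
    ((rhos_open.continuous.comp (continuous_fst.comp continuous_snd)).prodMk
      (continuous_snd.comp continuous_snd))

lemma Ph_open : IsOpenMap Ph := by
  have h3 : IsOpenMap (fun z : ℂ => 3 * z) :=
    (Homeomorph.mulLeft₀ (3:ℂ) (by norm_num)).isOpenMap
  have := cov_open.comp ((IsOpenMap.id (X := ℝ)).prodMap (h3.comp (Complex.isOpenMap_exp.comp
    (Complex.equivRealProdCLM.symm.toHomeomorph.isOpenMap.comp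
      (rhos_open.isOpenMap.prodMap IsOpenMap.id)))))
  exact this

lemma Ph_norm (P : ℝ × ℝ × ℝ) : ‖(Ph P).2‖ = 3 * Real.exp (rhos P.2.1) := by
  simp [Ph, cov, Complex.norm_exp]

lemma Ph_norm_gt (P : ℝ × ℝ × ℝ) : 2 < ‖(Ph P).2‖ := by
  rw [Ph_norm]
  have := Real.add_one_le_exp (rhos P.2.1)
  have := rhos_bd P.2.1
  linarith

lemma Ph_eq {P Q : ℝ × ℝ × ℝ} (h : Ph P = Ph Q) : ∃ i j : ℤ,
    Q = P + i • ((3/2, 0, 0) : ℝ × ℝ × ℝ) + j • ((0, 0, 2 * Real.pi) : ℝ × ℝ × ℝ) := by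
  have hr : P.2.1 = Q.2.1 := by
    have := congrArg (fun q : TT => ‖q.2‖) h
    simp only [Ph_norm] at this
    have := Real.exp_injective (mul_left_cancel₀ (by norm_num) this)
    exact rhos_open.injective this
  obtain ⟨k, hk⟩ := cov_eq h
  simp only [tr, Prod.mk.injEq] at hk
  obtain ⟨hk1, hk2⟩ := hk
  have hk2 := mul_left_cancel₀ (by norm_num : (3:ℂ) ≠ 0) hk2
  rw [Complex.exp_eq_exp_iff_exists_int] at hk2
  obtain ⟨j, hj⟩ := hk2
  refine ⟨k, j, ?_⟩
  have hj := congrArg Complex.im hj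
  simp at hj
  refine Prod.ext ?_ (Prod.ext ?_ ?_)
  · simp [hk1]
  · simp [hr]
  · simp [hj]

lemma Ph_surj {p : TT} (h : ‖p.2‖ = 3) : ∃ P, Ph P = p := by
  obtain ⟨⟨x, w⟩, rfl⟩ := cov_surj p
  refine ⟨(x, 0, w.arg), ?_⟩
  simp only [Ph, rhos_zero]
  congr 2
  have h2 := Complex.norm_mul_exp_arg_mul_I w
  change ‖w‖ = 3 at h
  rw [h] at h2
  rw [Complex.mk_eq_add_mul_I]
  simpa using h2

lemma Ph_per1 (P : ℝ × ℝ × ℝ) : Ph (P + ((3/2, 0, 0) : ℝ × ℝ × ℝ)) = Ph P := by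
  have := cov_tr 1 (P.1, 3 * Complex.exp ⟨rhos P.2.1, P.2.2⟩)
  simpa [Ph, tr] using this

lemma Ph_per2 (P : ℝ × ℝ × ℝ) : Ph (P + ((0, 0, 2 * Real.pi) : ℝ × ℝ × ℝ)) = Ph P := by
  have : (⟨rhos P.2.1, P.2.2 + 2 * Real.pi⟩ : ℂ) = ⟨rhos P.2.1, P.2.2⟩ + 2 * Real.pi * Complex.I := by
    apply Complex.ext <;> simp
  simp [Ph, this, Complex.exp_periodic _]

lemma hol {c : TT → TT → GG} {τ : ℝ × ℝ × ℝ → GG}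
    (hτ : LocPot univ (fun P Q => c (Ph P) (Ph Q)) τ) (h0 : τ 0 = 1) {γ : ℝ → ℝ × ℝ × ℝ}
    (hγ : Continuous γ) {b : ℝ} (hb : 0 ≤ b) (hγ0 : γ 0 = 0) {σ : ℝ → GG}
    (hσ : LocPot (Icc 0 b) (fun s t => c (Ph (γ s)) (Ph (γ t))) σ) (hσ0 : σ 0 = 1)
    (hper : ∀ P, Ph (P + γ b) = Ph P) (P : ℝ × ℝ × ℝ) : τ (P + γ b) = σ b * τ P := by
  have h1 : τ (γ b) = σ b := by
    have := LocPot.unique isPreconnected_Icc (hτ.pullback (hγ.continuousOn (s := Icc 0 b))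
      (mapsTo_univ _ _)) hσ (left_mem_Icc.2 hb) (right_mem_Icc.2 hb)
    simp only [hγ0, h0, hσ0] at this
    rw [eq_mul_inv_iff_mul_eq] at this
    simpa using this.symm
  have h2 : LocPot univ (fun P Q => c (Ph P) (Ph Q)) (fun P => τ (P + γ b)) := by
    have := hτ.pullback (f := fun P => P + γ b) (S' := univ) (by fun_prop) (mapsTo_univ _ _)
    simpa only [hper] using this
  have := LocPot.unique isPreconnected_univ h2 hτ (mem_univ P) (mem_univ 0)
  simp only [zero_add, h0, h1] at this
  rw [mul_inv_eq_iff_eq_mul] at this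
  simpa using this

lemma hh_notMem_JJ {p : TT} (h : p.2 ≠ 0) : hh p ∉ JJ := by
  rintro ⟨q, hq, e⟩
  rw [hh_inj e] at hq
  exact h hq

lemma notMem_JJ_of_norm {p : TT} (h : 2 ≤ ‖p.2‖) : p ∉ JJ := by
  rintro ⟨q, hq, rfl⟩
  exact (hh_bd q).not_ge h

lemma Ph_mk (x φ : ℝ) : Ph (x, 0, φ) = cov (x, ⟨3 * Real.cos φ, 3 * Real.sin φ⟩) := by
  simp only [Ph, rhos_zero]
  congr 2
  rw [Complex.mk_eq_add_mul_I, Complex.ofReal_zero, zero_add, Complex.exp_mul_I]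
  apply Complex.ext <;> simp [Complex.cos_ofReal_re, Complex.sin_ofReal_re, Complex.cos_ofReal_im,
    Complex.sin_ofReal_im]

/-- squash factor at radius 3 -/
noncomputable def kap : ℝ := (1 / 100) * (√(1 + 3 ^ 2))⁻¹ * 3
lemma kap_pos : 0 < kap := by unfold kap; positivity

lemma sqh3 (φ : ℝ) : sqh ⟨3 * Real.cos φ, 3 * Real.sin φ⟩ = ⟨kap * Real.cos φ, kap * Real.sin φ⟩ := by
  have hn : ‖(⟨3 * Real.cos φ, 3 * Real.sin φ⟩ : ℂ)‖ = 3 := by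
    rw [← sq_eq_sq₀ (norm_nonneg _) (by norm_num), ← Complex.normSq_eq_norm_sq, Complex.normSq_apply]
    have := Real.sin_sq_add_cos_sq φ
    simp only; nlinarith
  rw [sqh_apply, hn]
  apply Complex.ext
  · rw [Complex.re_ofReal_mul]; simp only [kap]; ring
  · rw [Complex.im_ofReal_mul]; simp only [kap]; ring

lemma hh_mer (φ : ℝ) : hh (Ph (0, 0, φ)) =
    cov (Real.exp (kap * Real.cos φ), ⟨0, kap * Real.sin φ⟩) := by
  rw [Ph_mk, ← cov_PI]
  congr 1
  have hz0 : hz (cov (0, ⟨3 * Real.cos φ, 3 * Real.sin φ⟩)) = (Real.exp (kap * Real.cos φ) : ℂ) := by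
    rw [cov, hz_mk, sqh3, Complex.mk_eq_add_mul_I]; simp
  simp only [PI, hz0]
  simp only [cov, sqh3]
  simp only [Complex.ofReal_re, Complex.ofReal_im, mul_zero, zero_add]

lemma hh_lon (t : ℝ) : hh (Ph (t, 0, 0)) = cov (gLI (Real.exp kap) (2 * Real.pi / LL * t)) := by
  rw [Ph_mk, ← cov_PI]
  congr 1
  have hz0 : hz (cov (t, ⟨3 * Real.cos 0, 3 * Real.sin 0⟩)) =
      ⟨Real.exp kap * Real.cos (2 * Real.pi / LL * t), Real.exp kap * Real.sin (2 * Real.pi / LL * t)⟩ := by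
    rw [cov, hz_mk, sqh3]
    apply Complex.ext
    · rw [Complex.exp_re]; simp
    · rw [Complex.exp_im]; simp
  simp only [PI, hz0]
  simp only [cov, sqh3, gLI]
  simp

lemma exp_kap : 1 < Real.exp kap ∧ Real.exp kap < 102/100 := by
  refine ⟨Real.one_lt_exp_iff.2 kap_pos, ?_⟩
  have := (exp_bounds ⟨3 * Real.cos 0, 3 * Real.sin 0⟩).2
  rw [sqh3] at this
  simpa using this

/-- the gauge transformation between consecutive stages -/
theorem gaugeT : ∃ g : TT → GG, ∀ p : TT, ‖p.2‖ = 3 → ∃ U ∈ 𝓝 p, ∀ p ∈ U, ∀ q ∈ U,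
    cT (hh p) (hh q) = (g p)⁻¹ * cT p q * g q := by
  have hpi := Real.pi_pos
  have A1 : ASOn univ (fun P Q => cT (Ph P) (Ph Q)) :=
    cT_as.pullback Ph_cont.continuousOn fun P _ => notMem_JJ_of_norm (Ph_norm_gt P).le
  have A2 : ASOn univ (fun P Q => cT (hh (Ph P)) (hh (Ph Q))) :=
    cT_as.pullback (hh_cont.comp Ph_cont).continuousOn fun P _ => hh_notMem_JJ
      (fun h => by have := Ph_norm_gt P; rw [h, norm_zero] at this; linarith)
  obtain ⟨τ, hτ, τ0⟩ := A1.exists_pot_univ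
  obtain ⟨υ, hυ, υ0⟩ := A2.exists_pot_univ
  -- the four holonomies
  have t1 : ∀ P, τ (P + ((3/2, 0, 0) : ℝ × ℝ × ℝ)) = gL * τ P := by
    intro P
    have := hol (c := cT) hτ τ0 (γ := fun t => (t, 0, 0)) (by fun_prop) (b := 3/2) (by norm_num) rfl
      (σ := fun t => gL ^ ⌊t / (3/2)⌋) (by
        have := lonO (Icc 0 (3/2))
        have e : ∀ t : ℝ, Ph (t, 0, 0) = cov (t, 3) := by
          intro t; rw [Ph_mk]; congr 2; apply Complex.ext <;> simp
        simpa only [e] using this) (by simp) Ph_per1 P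
    simpa using this
  have t2 : ∀ P, τ (P + ((0, 0, 2 * Real.pi) : ℝ × ℝ × ℝ)) = gM * τ P := by
    intro P
    have := hol (c := cT) hτ τ0 (γ := fun t => (0, 0, t)) (by fun_prop) (b := 2 * Real.pi)
      (by positivity) rfl
      (σ := sMO) (by simpa only [Ph_mk] using merO) sMO_zero Ph_per2 P
    rwa [sMO_end] at this
  have u1 : ∀ P, υ (P + ((3/2, 0, 0) : ℝ × ℝ × ℝ)) = gLam * υ P := by
    intro P
    have := hol (c := fun p q => cT (hh p) (hh q)) hυ υ0 (γ := fun t => (t, 0, 0)) (by fun_prop)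
      (b := 3/2) (by norm_num) rfl (σ := fun t => sLI (Real.exp kap) (2 * Real.pi / LL * t)) (by
        have := (lonI exp_kap.1 exp_kap.2).pullback (S' := Icc 0 (3/2))
          (f := fun t => 2 * Real.pi / LL * t) (by fun_prop) (by
            intro t ht
            constructor
            · have := ht.1; positivity
            · have := ht.2
              calc 2 * Real.pi / LL * t ≤ 2 * Real.pi / LL * (3/2) := by gcongr
                _ = 2 * Real.pi := by field_simp)
        simpa only [hh_lon] using this) (by simpa using sLI_zero exp_kap.1) Ph_per1 P
    have e : 2 * Real.pi / LL * (3/2) = 2 * Real.pi := by field_simp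
    simp only [e] at this
    rwa [sLI_end exp_kap.1 exp_kap.2] at this
  have u2 : ∀ P, υ (P + ((0, 0, 2 * Real.pi) : ℝ × ℝ × ℝ)) = gA0⁻¹ * υ P := by
    intro P
    have hx2 : 1 < Real.exp (kap * Real.cos (2 * Real.pi)) := by simpa using kap_pos
    have := hol (c := fun p q => cT (hh p) (hh q)) hυ υ0 (γ := fun t => (0, 0, t)) (by fun_prop)
      (b := 2 * Real.pi) (by positivity) rfl (σ := sMI fun s => Real.exp (kap * Real.cos s)) (by
        have := merI (x := fun s => Real.exp (kap * Real.cos s)) (v := fun s => kap * Real.sin s)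
          (by fun_prop) (by fun_prop)
          (by
            intro s
            have := exp_bounds ⟨3 * Real.cos s, 3 * Real.sin s⟩
            rw [sqh3] at this
            exact this)
          (fun s h1 h2 => mul_nonneg kap_pos.le (Real.sin_nonneg_of_nonneg_of_le_pi h1 h2))
          (fun s h1 h2 => mul_neg_of_pos_of_neg kap_pos (sin_neg' h1 h2))
          (by simpa using kap_pos) hx2
        simpa only [hh_mer] using this) (sMI_zero _) Ph_per2 P
    rwa [sMI_end hx2] at this
  set G : ℝ × ℝ × ℝ → GG := fun P => (τ P)⁻¹ * gK⁻¹ * υ P with hG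
  have p1 : Function.Periodic G (3/2, 0, 0) := by
    intro P
    simp only [hG, t1, u1, ← rell]
    group
  have p2 : Function.Periodic G (0, 0, 2 * Real.pi) := by
    intro P
    simp only [hG, t2, u2, ← relm]
    group
  have hwd : ∀ P Q, Ph P = Ph Q → G P = G Q := by
    intro P Q h
    obtain ⟨i, j, rfl⟩ := Ph_eq h
    rw [p2.zsmul j, p1.zsmul i]
  classical
  refine ⟨fun p => if h : ∃ P, Ph P = p then G h.choose else 1, ?_⟩
  have hg : ∀ P, (fun p => if h : ∃ P, Ph P = p then G h.choose else 1) (Ph P) = G P := by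
    intro P
    have hex : ∃ Q, Ph Q = Ph P := ⟨P, rfl⟩
    simp only [dif_pos hex]
    exact hwd _ _ hex.choose_spec
  intro p hp
  obtain ⟨P0, rfl⟩ := Ph_surj hp
  obtain ⟨U, hU, h1⟩ := hτ P0 (mem_univ _)
  obtain ⟨V, hV, h2⟩ := hυ P0 (mem_univ _)
  rw [nhdsWithin_univ] at hU hV
  refine ⟨Ph '' (U ∩ V), Ph_open.image_mem_nhds (inter_mem hU hV), ?_⟩
  rintro _ ⟨P, ⟨hP, hP'⟩, rfl⟩ _ ⟨Q, ⟨hQ, hQ'⟩, rfl⟩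
  rw [hg, hg]
  have e1 := h1 P hP Q hQ
  have e2 := h2 P hP' Q hQ'
  simp only at e1 e2
  rw [e1, e2, hG]
  group

end PartNo8

section PartNo9

open Set Filter Topology

/-- stages -/
noncomputable def jj (m : ℕ) (a : TT) : WW := Tele.ι hh hh_inj (m + 1) a

lemma jj_inj (m : ℕ) : Function.Injective (jj m) := Tele.ι_inj _
lemma jj_open (m : ℕ) : IsOpenEmbedding (jj m) := Tele.ι_open hh_open _
lemma jj_succ (m : ℕ) (a : TT) : jj (m + 1) (hh a) = jj m a := Tele.ι_succ _ _

lemma jj_lt {i m : ℕ} (h : i < m) (x : TT) : ∃ y, jj i x = jj m (hh y) := by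
  obtain ⟨k, rfl⟩ := Nat.exists_eq_add_of_lt h
  refine ⟨hh^[k] x, ?_⟩
  rw [← Function.iterate_succ_apply' hh k x]
  have := Tele.ι_add (h := hh) (hi := hh_inj) (i + 1) (k + 1) x
  rw [jj, ← this]
  rw [jj]
  congr 1
  omega

/-- closed stages -/
def Ks (m : ℕ) : Set WW := jj m '' {p | ‖p.2‖ ≤ 3}

lemma cpt_tube (s : Set ℂ) (hs : IsCompact s) : IsCompact {p : TT | p.2 ∈ s} := by
  have : {p : TT | p.2 ∈ s} = (univ : Set (AddCircle LL)) ×ˢ s := by ext; simp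
  rw [this]
  exact isCompact_univ.prod hs

lemma Ks_compact (m : ℕ) : IsCompact (Ks m) := by
  refine IsCompact.image ?_ (jj_open m).continuous
  have := cpt_tube _ (isCompact_closedBall (0:ℂ) 3)
  simpa using this

lemma JJ_compact : IsCompact JJ := by
  refine IsCompact.image ?_ hh_cont
  exact cpt_tube {0} isCompact_singleton

instance WW_t2 : T2Space WW := Tele.t2 hh_open

lemma notMem_Ks {m i : ℕ} (h : i < m) {a : TT} (ha : 2 ≤ ‖a.2‖) : jj m a ∉ Ks i := by
  rintro ⟨x, -, hx⟩
  obtain ⟨y, hy⟩ := jj_lt h x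
  rw [hy] at hx
  rw [← jj_inj m hx] at ha
  exact (hh_bd y).not_ge ha

/-- level -/
noncomputable def lev (p : WW) : ℕ := sInf {m | p ∈ Ks m}

lemma mem_Ks_ex (p : WW) : ∃ m, p ∈ Ks m := by
  obtain ⟨n, x, rfl⟩ := Tele.exists_ι p
  refine ⟨n, hh x, (hh_bd x).le.trans (by norm_num), ?_⟩
  exact Tele.ι_succ _ _

lemma mem_lev (p : WW) : p ∈ Ks (lev p) := Nat.sInf_mem (mem_Ks_ex p)

lemma lev_eq {p : WW} {m : ℕ} (h : p ∈ Ks m) (h' : ∀ i < m, p ∉ Ks i) : lev p = m := by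
  apply le_antisymm
  · exact Nat.sInf_le h
  · by_contra hlt
    exact h' _ (not_le.1 hlt) (mem_lev p)

lemma lev_le {m : ℕ} {a : TT} (h : ∀ i < m, jj m a ∉ Ks i) (ha : ‖a.2‖ ≤ 3) : lev (jj m a) = m :=
  lev_eq ⟨a, ha, rfl⟩ h

lemma lev_gt {m : ℕ} {a : TT} (h : ∀ i < m, jj m a ∉ Ks i) (ha : ¬ ‖a.2‖ ≤ 3) :
    lev (jj m a) = m + 1 := by
  refine lev_eq ⟨hh a, (hh_bd a).le.trans (by norm_num), jj_succ m a⟩ fun i hi => ?_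
  rcases Nat.lt_succ_iff_lt_or_eq.1 hi with hi | rfl
  · exact h i hi
  · rintro ⟨x, hx, e⟩
    rw [jj_inj _ e] at hx
    exact ha hx

/-- stage coordinates -/
noncomputable def iv (m : ℕ) (p : WW) : TT := Function.invFun (jj m) p
lemma iv_jj (m : ℕ) (a : TT) : iv m (jj m a) = a := Function.leftInverse_invFun (jj_inj m) a

/-- local gauge factors -/
noncomputable def AA (g : TT → GG) (n : ℕ) (p : WW) : GG := if lev p = n then 1 else g (iv n p)

/-- the global cocycle -/
noncomputable def CW (g : TT → GG) (p q : WW) : GG :=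
  (AA g (min (lev p) (lev q)) p)⁻¹ *
    cT (iv (min (lev p) (lev q)) p) (iv (min (lev p) (lev q)) q) * AA g (min (lev p) (lev q)) q

open Classical in
lemma CW_jj (g : TT → GG) {m : ℕ} {a b : TT} (ha : ∀ i < m, jj m a ∉ Ks i)
    (hb : ∀ i < m, jj m b ∉ Ks i)
    (hg : ¬ ‖a.2‖ ≤ 3 → ¬ ‖b.2‖ ≤ 3 → cT (hh a) (hh b) = (g a)⁻¹ * cT a b * g b) :
    CW g (jj m a) (jj m b) = (if ‖a.2‖ ≤ 3 then 1 else g a)⁻¹ * cT a b *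
      (if ‖b.2‖ ≤ 3 then 1 else g b) := by
  unfold CW AA
  by_cases h1 : ‖a.2‖ ≤ 3 <;> by_cases h2 : ‖b.2‖ ≤ 3
  · rw [lev_le ha h1, lev_le hb h2]; simp [h1, h2, iv_jj]
  · rw [lev_le ha h1, lev_gt hb h2]; simp [h1, h2, iv_jj]
  · rw [lev_gt ha h1, lev_le hb h2]; simp [h1, h2, iv_jj]
  · rw [lev_gt ha h1, lev_gt hb h2]
    simp only [min_self, if_true, h1, h2, if_false, inv_one, one_mul, mul_one]
    rw [← hg h1 h2, ← jj_succ m a, ← jj_succ m b, iv_jj, iv_jj]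

lemma CW_as {g : TT → GG} (hg : ∀ p : TT, ‖p.2‖ = 3 → ∃ U ∈ 𝓝 p, ∀ p ∈ U, ∀ q ∈ U,
    cT (hh p) (hh q) = (g p)⁻¹ * cT p q * g q) : ASOn (jj 0 '' JJ)ᶜ (CW g) := by
  classical
  intro p0 hp0
  obtain ⟨a0, ha0, e0⟩ := mem_lev p0
  set m := lev p0 with hm
  have hmin : ∀ i < m, p0 ∉ Ks i := fun i hi h => (Nat.sInf_le (s := {m | p0 ∈ Ks m}) h).not_gt hi
  have haJ : a0 ∉ JJ := by
    intro hJ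
    rcases Nat.eq_zero_or_pos m with h | h
    · rw [h] at e0
      exact hp0 ⟨a0, hJ, e0⟩
    · obtain ⟨b, hb, rfl⟩ := hJ
      obtain ⟨n, hn⟩ := Nat.exists_eq_add_one.2 h
      rw [hn, jj_succ] at e0
      refine hmin n (by omega) ⟨b, ?_, e0⟩
      have : b.2 = 0 := hb
      simp [this]
  obtain ⟨U, hU, hUc⟩ := cT_as a0 haJ
  rw [JJ_compact.isClosed.isOpen_compl.nhdsWithin_eq haJ] at hU
  have hV0 : {a : TT | ∀ i < m, jj m a ∉ Ks i} ∈ 𝓝 a0 := by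
    have : IsClosed (⋃ i ∈ Finset.range m, Ks i) :=
      isClosed_biUnion_finset fun i _ => (Ks_compact i).isClosed
    have h2 : (⋃ i ∈ Finset.range m, Ks i)ᶜ ∈ 𝓝 (jj m a0) := by
      apply this.isOpen_compl.mem_nhds
      rw [e0]
      simpa using hmin
    filter_upwards [(jj_open m).continuous.continuousAt.preimage_mem_nhds h2] with a ha
    simpa using ha
  obtain ⟨V, hV, hVg⟩ : ∃ V ∈ 𝓝 a0, ∀ a ∈ V, ∀ b ∈ V, ¬ ‖a.2‖ ≤ 3 → ¬ ‖b.2‖ ≤ 3 →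
      cT (hh a) (hh b) = (g a)⁻¹ * cT a b * g b := by
    rcases (show ‖a0.2‖ ≤ 3 from ha0).lt_or_eq with h | h
    · have hc : Continuous fun a : TT => ‖a.2‖ := by fun_prop
      refine ⟨_, hc.continuousAt.eventually_lt_const h, ?_⟩
      intro a ha b _ h'
      exact absurd (le_of_lt ha) h'
    · obtain ⟨V, hV, h⟩ := hg a0 h
      exact ⟨V, hV, fun a ha b hb _ _ => h a ha b hb⟩
  refine ⟨jj m '' (U ∩ ({a : TT | ∀ i < m, jj m a ∉ Ks i} ∩ V)), ?_, ?_⟩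
  · rw [← e0]
    exact mem_nhdsWithin_of_mem_nhds ((jj_open m).isOpenMap.image_mem_nhds
      (inter_mem hU (inter_mem hV0 hV)))
  · rintro _ ⟨a, ⟨a1, a2, a3⟩, rfl⟩ _ ⟨b, ⟨b1, b2, b3⟩, rfl⟩ _ ⟨d, ⟨d1, d2, d3⟩, rfl⟩
    rw [CW_jj g a2 b2 (hVg a a3 b b3), CW_jj g b2 d2 (hVg b b3 d d3),
      CW_jj g a2 d2 (hVg a a3 d d3), ← hUc a a1 b b1 d d1]
    group

/-- points of the plane as complex numbers -/
noncomputable def toC (z : EuclideanSpace ℝ (Fin 2)) : ℂ := ⟨3 * z 0, 3 * z 1⟩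

lemma toC_cont : Continuous toC := by
  exact Complex.equivRealProdCLM.symm.continuous.comp
    (f := fun z : EuclideanSpace ℝ (Fin 2) => (3 * z 0, 3 * z 1)) (by fun_prop)

lemma toC_norm {z : EuclideanSpace ℝ (Fin 2)} (h : z ∈ Metric.sphere (0 : EuclideanSpace ℝ (Fin 2)) 1) :
    ‖toC z‖ = 3 := by
  have h1 : ‖z‖ = 1 := by simpa using h
  have h2 : ‖z‖ ^ 2 = z 0 ^ 2 + z 1 ^ 2 := by
    rw [EuclideanSpace.norm_sq_eq]; simp
  rw [← sq_eq_sq₀ (norm_nonneg _) (by norm_num), ← Complex.normSq_eq_norm_sq, Complex.normSq_apply]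
  rw [h1] at h2
  simp only [toC]; nlinarith

theorem WW_not_sci : ¬ SimplyConnectedAtInfinity WW := by
  intro hsci
  obtain ⟨g, hg⟩ := gaugeT
  have hAS := CW_as hg
  obtain ⟨K, hK, hkK, hloop⟩ := hsci (jj 0 '' JJ) (JJ_compact.image (jj_open 0).continuous)
  have hOo : ∀ n, IsOpen (jj n '' {p : TT | ‖p.2‖ < 3}) := fun n =>
    (jj_open n).isOpenMap _ (isOpen_lt (by fun_prop) continuous_const)
  have hOm : ∀ i n, i ≤ n → jj i '' {p : TT | ‖p.2‖ < 3} ⊆ jj n '' {p : TT | ‖p.2‖ < 3} := by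
    intro i n hin
    rcases hin.lt_or_eq with h | rfl
    · rintro _ ⟨x, -, rfl⟩
      obtain ⟨y, hy⟩ := jj_lt h x
      exact ⟨hh y, (hh_bd y).trans (by norm_num), hy.symm⟩
    · exact subset_rfl
  obtain ⟨n, hn⟩ := hK.elim_directed_cover (fun n => jj n '' {p : TT | ‖p.2‖ < 3}) hOo
    (by
      intro p _
      obtain ⟨n, x, rfl⟩ := Tele.exists_ι p
      exact mem_iUnion.2 ⟨n, hh x, (hh_bd x).trans (by norm_num), Tele.ι_succ _ _⟩)
    (directed_of_isDirected_le fun i j hij => hOm i j hij)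
  obtain ⟨H, hH, hHk, hHb⟩ := hloop (fun z => jj n ((0 : AddCircle LL), toC z))
    ((jj_open n).continuous.comp (continuous_const.prodMk (toC_cont.comp continuous_subtype_val)))
    (by
      intro z hz
      obtain ⟨x, hx, e⟩ := hn hz
      rw [jj_inj n e] at hx
      have h3 := toC_norm z.2
      simp only [mem_setOf_eq] at hx
      rw [h3] at hx
      exact lt_irrefl _ hx)
  have hfs : ∀ t : ℝ, (!₂[Real.cos t, Real.sin t] : EuclideanSpace ℝ (Fin 2)) ∈
      Metric.sphere (0 : EuclideanSpace ℝ (Fin 2)) 1 := by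
    intro t
    rw [mem_sphere_zero_iff_norm, ← sq_eq_sq₀ (norm_nonneg _) zero_le_one, EuclideanSpace.norm_sq_eq]
    simp
  have hfc : Continuous fun t : ℝ => (!₂[Real.cos t, Real.sin t] : EuclideanSpace ℝ (Fin 2)) := by
    refine (PiLp.continuous_toLp 2 _).comp (continuous_pi fun i => ?_)
    fin_cases i
    · exact Real.continuous_cos
    · exact Real.continuous_sin
  have hC : ∀ s t : ℝ, CW g (H ⟨_, Metric.sphere_subset_closedBall (hfs s)⟩)
      (H ⟨_, Metric.sphere_subset_closedBall (hfs t)⟩) =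
      cT (cov (0, ⟨3 * Real.cos s, 3 * Real.sin s⟩)) (cov (0, ⟨3 * Real.cos t, 3 * Real.sin t⟩)) := by
    intro s t
    rw [hHb _ (hfs s), hHb _ (hfs t)]
    have e : ∀ s, (((0 : AddCircle LL), toC !₂[Real.cos s, Real.sin s]) : TT) =
        cov (0, ⟨3 * Real.cos s, 3 * Real.sin s⟩) := by
      intro s; simp [cov, toC]
    have hno : ∀ s, ‖(((0 : AddCircle LL), toC !₂[Real.cos s, Real.sin s]) : TT).2‖ = 3 :=
      fun s => toC_norm (hfs s)
    rw [CW_jj g (fun i hi => notMem_Ks hi (by rw [hno]; norm_num))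
      (fun i hi => notMem_Ks hi (by rw [hno]; norm_num)) (fun h => absurd (hno s).le h),
      if_pos (hno s).le, if_pos (hno t).le, e, e]
    simp
  have := no_disc hAS hH hHk (a := 0) (b := 2 * Real.pi) (by positivity) hfc
    (fun t => Metric.sphere_subset_closedBall (hfs t)) (by simp) (σ := sMO)
    (by simpa only [hC] using merO)
  rw [sMO_zero, sMO_end] at this
  exact gM_ne this.symm

/-- the Whitehead manifold, bundled -/
theorem final : ∃ W : ContractibleOpen3Manifold,
    ¬ SimplyConnectedAtInfinity W.carrier ∧
      IsEmpty (W.carrier ≃ₜ EuclideanSpace ℝ (Fin 3)) ∧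
      Nonempty ((W.carrier × ℝ) ≃ₜ EuclideanSpace ℝ (Fin 4)) := by
  obtain ⟨e⟩ := WW_prod
  have hc : ContractibleSpace WW := by
    have : ContractibleSpace (WW × ℝ) := e.contractibleSpace
    rw [contractible_iff_id_nullhomotopic] at this ⊢
    obtain ⟨y, ⟨F⟩⟩ := this
    refine ⟨y.1, ⟨⟨⟨fun q => (F (q.1, (q.2, 0))).1, by fun_prop⟩, ?_, ?_⟩⟩⟩
    · intro x; simp
    · intro x; simp
  have hsc := Tele.secondCountable (hi := hh_inj) hh_open
  let _ : ChartedSpace (EuclideanSpace ℝ (Fin 3)) WW := chartedOf (Tele_chart (hi := hh_inj) hh_open)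
  have hconn : ConnectedSpace WW := inferInstance
  have hnc : NoncompactSpace WW := by
    refine ⟨fun hu => WW_not_sci fun k _ => ⟨univ, hu, subset_univ _, fun γ _ hγ => ?_⟩⟩
    exact absurd (mem_univ _) (hγ ⟨!₂[1, 0], by simp [EuclideanSpace.norm_eq]⟩)
  refine ⟨⟨WW⟩, WW_not_sci, ⟨fun e => WW_not_sci (sci_of_homeo e R3_sci)⟩, ⟨e⟩⟩

end PartNo9

/-- **The Whitehead manifold.** There exists a contractible open 3-manifold `W` which is
not simply connected at infinity — in particular not homeomorphic to `ℝ³` — but such that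
`W × ℝ` is homeomorphic to `ℝ⁴`. -/
theorem exists_whitehead_manifold :
    ∃ W : ContractibleOpen3Manifold,
      ¬ SimplyConnectedAtInfinity W.carrier ∧
      IsEmpty (W.carrier ≃ₜ EuclideanSpace ℝ (Fin 3)) ∧
      Nonempty ((W.carrier × ℝ) ≃ₜ EuclideanSpace ℝ (Fin 4)) := by
  exact final
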